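/- arXiv:2505.07048 — 5 statements merged into one kernel-verified Lean document; each statement's English description precedes it below -/
import Mathlib

section
/- Let Ω be a nonempty open subset of ℂ. Then the set S_p \ S_uc is strongly 𝔠-algebrable in H(Ω)^ℕ: there exists a subset B of H(Ω)^ℕ of cardinality 𝔠 (the continuum) such that for every m ≥ 1, every choice of pairwise distinct elements b_1, …, b_m of B, and every nonzero complex polynomial P in m variables with zero constant term, the sequence P(b_1, …, b_m) (where products of sequences are taken coordinatewise, (f_n)·(g_n) = (f_n·g_n)) is a nonzero element of S_p \ S_uc. -/
open Filter Topology

set_option synthInstance.maxHeartbeats 1000000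
set_option maxHeartbeats 1000000

noncomputable section

/-- The subalgebra of `C(Ω, ℂ)` consisting of (restrictions to `Ω` of) functions
holomorphic on `Ω`. -/
def Hol (Ω : Set ℂ) : Subalgebra ℂ C(Ω, ℂ) where
  carrier := {f | ∃ g : ℂ → ℂ, DifferentiableOn ℂ g Ω ∧ ∀ z : Ω, f z = g z}
  mul_mem' := by
    rintro f₁ f₂ ⟨g₁, hg₁, he₁⟩ ⟨g₂, hg₂, he₂⟩
    exact ⟨g₁ * g₂, hg₁.mul hg₂, fun z => by simp [he₁ z, he₂ z]⟩
  add_mem' := by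
    rintro f₁ f₂ ⟨g₁, hg₁, he₁⟩ ⟨g₂, hg₂, he₂⟩
    exact ⟨g₁ + g₂, hg₁.add hg₂, fun z => by simp [he₁ z, he₂ z]⟩
  algebraMap_mem' := fun c => ⟨fun _ => c, differentiableOn_const c, fun _ => rfl⟩

/-- The space `H(Ω)^ℕ` of sequences of holomorphic functions on `Ω`, with the
product topology (each factor carrying the compact-open topology). -/
abbrev HSeq (Ω : Set ℂ) := ℕ → Hol Ω

/-- Sequences tending to `0` pointwise on `Ω`. -/
def Sp (Ω : Set ℂ) : Set (HSeq Ω) :=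
  {F | ∀ z : Ω, Tendsto (fun n => (F n : C(Ω, ℂ)) z) atTop (𝓝 0)}

/-- Sequences tending to `0` uniformly on each compact subset of `Ω`. -/
def Suc (Ω : Set ℂ) : Set (HSeq Ω) :=
  {F | ∀ K : Set Ω, IsCompact K →
    TendstoUniformlyOn (fun n (z : Ω) => (F n : C(Ω, ℂ)) z) 0 atTop K}

/-- Sequences tending to `0` uniformly on `Ω`. -/
def Su (Ω : Set ℂ) : Set (HSeq Ω) :=
  {F | TendstoUniformly (fun n (z : Ω) => (F n : C(Ω, ℂ)) z) 0 atTop}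

/-- Restriction of a holomorphic function on `Ω₂` to a subset `Ω₁ ⊆ Ω₂`. -/
def holRestrict {Ω₁ Ω₂ : Set ℂ} (h : Ω₁ ⊆ Ω₂) (f : Hol Ω₂) : Hol Ω₁ := by
  refine ⟨(f : C(Ω₂, ℂ)).comp ⟨Set.inclusion h, continuous_inclusion h⟩, ?_⟩
  obtain ⟨g, hg, he⟩ := f.2
  exact ⟨g, hg.mono h, fun z => he ⟨z, h z.2⟩⟩

end

/-!
By Runge's theorem there are polynomials `p n` tending to `0` pointwise, as fast as we like, with
`p n (u n) = 1` along a sequence `u n → z₀` in `Ω`: remove from a large square a thin strip around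
`u n`, so that the complement stays connected and every fixed point is eventually kept. Take an
independent family `v x : ℕ → ℕ`, indexed by the Cantor space, whose members are dominated by one
sequence, and set `f x n = v x n • p n`. The decay of `p` beats that sequence, so `f x ∈ S_p`, and
`S_p` is stable under polynomials without constant term. If `P ≠ 0`, then `P` is nonzero at some
tuple `w` of natural numbers; by independence `P (f x₁, …, f xₘ)` takes the value `P w` at
`(n, u n)` for infinitely many `n`, whereas a sequence in `S_uc` tends to `0` along `u`.
-/

noncomputable section

/-! ### Polynomials concentrated near a point -/

lemma exists_mem_closure_polynomialFunctions_mul_eq_one {K : Set ℂ} (hK : IsCompact K)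
    (hKc : IsPreconnected Kᶜ) {a : ℂ} (ha : a ∉ K) :
    ∃ y ∈ closure (polynomialFunctions K : Set C(K, ℂ)),
      (Polynomial.C a - Polynomial.X).toContinuousMapOn K * y = 1 := by
  have : CompactSpace K := isCompact_iff_compactSpace.mp hK
  let S : Subalgebra ℂ C(K, ℂ) := (polynomialFunctions K).topologicalClosure
  have : IsClosed (S : Set C(K, ℂ)) := (polynomialFunctions K).isClosed_topologicalClosure
  let x : S := ⟨Polynomial.X.toContinuousMapOn K,
    (polynomialFunctions K).le_topologicalClosure ⟨Polynomial.X, trivial, rfl⟩⟩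
  have hspec : spectrum ℂ (x : C(K, ℂ)) = K := by
    rw [ContinuousMap.spectrum_eq_range]
    ext z
    simp [x]
  -- Passing to the closed subalgebra `S` can only fill holes of the spectrum, and `K` has none.
  have hunit : IsUnit (algebraMap ℂ S a - x) := by
    rwa [← spectrum.notMem_iff, Subalgebra.spectrum_eq_of_isPreconnected_compl S x (by rwa [hspec]),
      hspec]
  obtain ⟨y, hy⟩ := hunit.exists_right_inv
  refine ⟨y, y.2, ?_⟩
  have hxy : (algebraMap ℂ S a - x : C(K, ℂ)) * y = 1 := congrArg Subtype.val hy
  convert hxy using 2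
  ext z
  simp [x]

lemma exists_polynomial_eval_eq_one_of_notMem {K : Set ℂ} (hK : IsCompact K)
    (hKc : IsPreconnected Kᶜ) {a : ℂ} (ha : a ∉ K) {ε : ℝ} (hε : 0 < ε) :
    ∃ p : Polynomial ℂ, p.eval a = 1 ∧ ∀ z ∈ K, ‖p.eval z‖ < ε := by
  have : CompactSpace K := isCompact_iff_compactSpace.mp hK
  obtain ⟨y, hy, hmul⟩ := exists_mem_closure_polynomialFunctions_mul_eq_one hK hKc ha
  let d : Polynomial ℂ := Polynomial.C a - Polynomial.X
  have hone : (1 : C(K, ℂ)) ∈ closure ((d.toContinuousMapOn K * ·) '' polynomialFunctions K) :=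
    hmul ▸ image_closure_subset_closure_image (continuous_const_mul _) ⟨y, hy, rfl⟩
  obtain ⟨_, ⟨_, ⟨q, -, rfl⟩, rfl⟩, hq⟩ := Metric.mem_closure_iff.mp hone ε hε
  refine ⟨1 - d * q, by simp [d], fun z hz => ?_⟩
  simpa [dist_eq_norm] using (ContinuousMap.dist_apply_le_dist (⟨z, hz⟩ : K)).trans_lt hq

/-- The square `[-R, R] × [-R, R]` with the open horizontal strip `s < Im z < t` removed, a
compact set with connected complement. -/
def slitSquare (R s t : ℝ) : Set ℂ :=
  Set.Icc (-R) R ×ℂ (Set.Icc (-R) R \ Set.Ioo s t)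

lemma isCompact_slitSquare (R s t : ℝ) : IsCompact (slitSquare R s t) :=
  isCompact_Icc.reProdIm (isCompact_Icc.diff isOpen_Ioo)

lemma isPreconnected_compl_slitSquare (R : ℝ) {s t : ℝ} (hst : s < t) :
    IsPreconnected (slitSquare R s t)ᶜ := by
  have hright : IsPreconnected {z : ℂ | R < z.re} := (convex_halfSpace_re_gt R).isPreconnected
  have hleft : IsPreconnected {z : ℂ | z.re < -R} := (convex_halfSpace_re_lt (-R)).isPreconnected
  have htop : IsPreconnected {z : ℂ | R < z.im} := (convex_halfSpace_im_gt R).isPreconnected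
  have hbot : IsPreconnected {z : ℂ | z.im < -R} := (convex_halfSpace_im_lt (-R)).isPreconnected
  have hstrip : IsPreconnected ({z : ℂ | s < z.im} ∩ {z : ℂ | z.im < t}) :=
    ((convex_halfSpace_im_gt s).inter (convex_halfSpace_im_lt t)).isPreconnected
  obtain ⟨y, hy⟩ := exists_between hst
  have hunion := (((hright.union' ⟨⟨R + 1, R + 1⟩, by simp⟩ htop).union'
    ⟨⟨-R - 1, R + 1⟩, by simp⟩ hleft).union' ⟨⟨R + 1, -R - 1⟩, by simp⟩ hbot).union'
    ⟨⟨R + 1, y⟩, by simp [hy]⟩ hstrip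
  convert hunion using 1
  ext z
  simp only [slitSquare, Complex.mem_reProdIm, Set.mem_compl_iff, Set.mem_sdiff, Set.mem_inter_iff,
    Set.mem_Icc, Set.mem_Ioo, Set.mem_union, Set.mem_ofPred_eq]
  grind

lemma eventually_mem_slitSquare {s : ℝ} {t : ℕ → ℝ} (ht : Tendsto t atTop (𝓝 s)) (z : ℂ) :
    ∀ᶠ n : ℕ in atTop, z ∈ slitSquare n s (t n) := by
  have hsquare : ∀ᶠ n : ℕ in atTop, ‖z‖ ≤ n :=
    tendsto_natCast_atTop_atTop.eventually_ge_atTop _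
  have hstrip : ∀ᶠ n : ℕ in atTop, z.im ∉ Set.Ioo s (t n) := by
    rcases le_or_gt z.im s with hz | hz
    · exact .of_forall fun n hn => hz.not_gt hn.1
    · filter_upwards [ht.eventually_lt_const hz] with n hn hzn using hn.not_gt hzn.2
  filter_upwards [hsquare, hstrip] with n hn hzn
  exact ⟨abs_le.mp ((Complex.abs_re_le_norm z).trans hn),
    abs_le.mp ((Complex.abs_im_le_norm z).trans hn), hzn⟩

lemma exists_polynomial_seq_eval_eq_one {s : ℝ} {a : ℕ → ℂ} (has : ∀ n, s < (a n).im)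
    (ha : Tendsto (fun n => (a n).im) atTop (𝓝 s)) (G : ℕ → ℝ) :
    ∃ p : ℕ → Polynomial ℂ, (∀ n, (p n).eval (a n) = 1) ∧
      ∀ z, Tendsto (fun n => G n * ‖(p n).eval z‖) atTop (𝓝 0) := by
  let t (n : ℕ) : ℝ := 2 * (a n).im - s
  have hat (n : ℕ) : (a n).im < t n := by linarith [has n]
  have ht : Tendsto t atTop (𝓝 s) := by
    convert (ha.const_mul 2).sub_const s using 2
    ring
  choose p hpa hp using fun n : ℕ => exists_polynomial_eval_eq_one_of_notMem
    (isCompact_slitSquare n s (t n)) (isPreconnected_compl_slitSquare n ((has n).trans (hat n)))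
    (fun h => h.2.2 ⟨has n, hat n⟩) (show 0 < 1 / ((|G n| + 1) * (n + 1 : ℝ)) by positivity)
  refine ⟨p, hpa, fun z =>
    squeeze_zero_norm' ?_ (tendsto_one_div_add_atTop_nhds_zero_nat (𝕜 := ℝ))⟩
  filter_upwards [eventually_mem_slitSquare ht z] with n hn
  rw [norm_mul, norm_norm, Real.norm_eq_abs]
  calc |G n| * ‖(p n).eval z‖
      ≤ (|G n| + 1) * (1 / ((|G n| + 1) * (n + 1))) := by
        gcongr
        exacts [by simp, (hp n z hn).le]
    _ = 1 / (n + 1) := by field_simp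

lemma exists_seq_tendsto_lt_im {Ω : Set ℂ} {z : Ω} (hz : (z : ℂ) ∈ interior Ω) :
    ∃ u : ℕ → Ω, Tendsto u atTop (𝓝 z) ∧ ∀ n, (z : ℂ).im < (u n : ℂ).im := by
  have hcl : (z : ℂ) ∈ closure {w : ℂ | (z : ℂ).im < w.im} := by
    rw [Complex.closure_setOfPred_lt_im]
    exact le_refl (z : ℂ).im
  obtain ⟨u, hu, hlim⟩ :=
    mem_closure_iff_seq_limit.mp (isOpen_interior.inter_closure ⟨hz, hcl⟩)
  exact ⟨fun n => ⟨u n, interior_subset (hu n).1⟩, tendsto_subtype_rng.mpr hlim, fun n => (hu n).2⟩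

/-! ### Independent families of sequences -/

/-- A family of sequences is independent if on any finite subfamily arbitrary values can be
prescribed simultaneously, and they are attained at infinitely many indices. -/
def IsIndependentFamily {ι D : Type*} (v : ι → ℕ → D) : Prop :=
  ∀ (s : Finset ι) (w : ι → D), ∃ᶠ n in atTop, ∀ x ∈ s, v x n = w x

lemma eventually_injOn_restrict {α : Type*} (s : Finset (ℕ → α)) :
    ∀ᶠ k in atTop, Set.InjOn (fun (x : ℕ → α) (j : Fin k) => x j) s := by
  have hpair (x y : ℕ → α) :
      ∀ᶠ k in atTop, (fun j : Fin k => x j) = (fun j : Fin k => y j) → x = y := by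
    by_cases hxy : x = y
    · exact .of_forall fun _ _ => hxy
    · obtain ⟨j, hj⟩ := Function.ne_iff.mp hxy
      filter_upwards [eventually_gt_atTop j] with k hk h
      exact absurd (congrFun h ⟨j, hk⟩) hj
  have hpairs := (eventually_all_finset s).mpr fun x _ =>
    (eventually_all_finset s).mpr fun y _ => hpair x y
  filter_upwards [hpairs] with k hk x hx y hy using hk x hx y hy

lemma exists_isIndependentFamily (D : Type*) [Countable D] [Nonempty D] :
    ∃ v : (ℕ → Bool) → ℕ → D, IsIndependentFamily v ∧
      ∀ n, (Set.range fun x => v x n).Finite := by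
  -- With `e n = (k, g)`, the value `v x n` is `g` at the first `k` digits of `x`. Finitely many
  -- `x` are separated by their first `k` digits for large `k`, so `g` can prescribe their values.
  obtain ⟨e, he⟩ := exists_surjective_nat (Σ k : ℕ, (Fin k → Bool) → D)
  have hfin (n : ℕ) : (Set.range fun x : ℕ → Bool => (e n).2 fun j => x j).Finite :=
    (Set.finite_range (e n).2).subset (by rintro _ ⟨x, rfl⟩; exact ⟨_, rfl⟩)
  refine ⟨fun x n => (e n).2 fun j => x j, fun s w => ?_, hfin⟩
  let restrict (k : ℕ) (x : s) (j : Fin k) : Bool := x.1 j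
  let code (k : ℕ) : Σ k : ℕ, (Fin k → Bool) → D :=
    ⟨k, Function.extend (restrict k) (fun x => w x) fun _ => Classical.arbitrary D⟩
  let index (k : ℕ) : ℕ := Function.surjInv he (code k)
  have hindex : Tendsto index atTop atTop := by
    refine Function.Injective.nat_tendsto_atTop ((Function.injective_surjInv he).comp ?_)
    exact fun k l h => congrArg Sigma.fst h
  refine hindex.frequently (Eventually.frequently ?_)
  filter_upwards [eventually_injOn_restrict s] with k hk x hx
  have hinj : Function.Injective (restrict k) := Set.injOn_iff_injective.mp hk
  have hindex_code : e (index k) = code k := Function.surjInv_eq he (code k)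
  rw [hindex_code]
  exact hinj.extend_apply (fun x : s => w x) (fun _ => Classical.arbitrary D) ⟨x, hx⟩

lemma exists_eval_natCast_ne_zero {σ R : Type*} [CommRing R] [IsDomain R] [CharZero R]
    {P : MvPolynomial σ R} (hP : P ≠ 0) :
    ∃ w : σ → ℕ, MvPolynomial.eval (fun i => (w i : R)) P ≠ 0 := by
  contrapose! hP
  refine MvPolynomial.funext_set (fun _ => Set.range ((↑) : ℕ → R))
    (fun _ => Set.infinite_range_of_injective Nat.cast_injective) fun x hx => ?_
  choose w hw using fun i => hx i trivial
  obtain rfl : (fun i => (w i : R)) = x := funext hw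
  rw [hP w, map_zero]

lemma IsIndependentFamily.exists_frequently_eval_eq {σ R : Type*} [CommRing R] [IsDomain R]
    [CharZero R] {v : σ → ℕ → ℕ} (hv : IsIndependentFamily v) {P : MvPolynomial σ R}
    (hP : P ≠ 0) :
    ∃ c ≠ 0, ∃ᶠ n in atTop, MvPolynomial.eval (fun i => (v i n : R)) P = c := by
  obtain ⟨w, hw⟩ := exists_eval_natCast_ne_zero hP
  refine ⟨_, hw, (hv P.vars w).mono fun n hn => ?_⟩
  exact MvPolynomial.eval₂Hom_congr' rfl (fun i hi _ => by rw [hn i hi]) rfl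

/-! ### Sequences of holomorphic functions -/

section HSeq

variable {Ω : Set ℂ} {ι : Type*}

/-- Evaluation of the `n`-th term of a sequence of holomorphic functions at `z`, as an algebra
homomorphism. -/
def HSeq.evalAlgHom (n : ℕ) (z : Ω) : HSeq Ω →ₐ[ℂ] ℂ :=
  ((ContinuousMap.evalAlgHom ℂ ℂ z).comp (Hol Ω).val).comp (Pi.evalAlgHom ℂ (fun _ => Hol Ω) n)

lemma HSeq.aeval_apply (b : ι → HSeq Ω) (P : MvPolynomial ι ℂ) (n : ℕ) (z : Ω) :
    (MvPolynomial.aeval b P n : C(Ω, ℂ)) z =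
      MvPolynomial.eval (fun i => (b i n : C(Ω, ℂ)) z) P := by
  change HSeq.evalAlgHom n z (MvPolynomial.aeval b P) = _
  rw [← MvPolynomial.aeval_eq_eval, ← AlgHom.comp_apply, MvPolynomial.comp_aeval]
  rfl

lemma aeval_mem_Sp {b : ι → HSeq Ω} (hb : ∀ i, b i ∈ Sp Ω) {P : MvPolynomial ι ℂ}
    (hP : P.coeff 0 = 0) : MvPolynomial.aeval b P ∈ Sp Ω := by
  intro z
  have hlim := ((MvPolynomial.continuous_eval P).tendsto 0).comp
    (tendsto_pi_nhds.mpr fun i => hb i z)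
  rw [MvPolynomial.eval_zero, MvPolynomial.constantCoeff_eq, hP] at hlim
  simpa only [HSeq.aeval_apply, Function.comp_def] using hlim

lemma zero_mem_Suc : (0 : HSeq Ω) ∈ Suc Ω := fun K _ =>
  Metric.tendstoUniformlyOn_iff.mpr fun ε hε => .of_forall fun n z _ => by simpa using hε

lemma tendsto_apply_of_mem_Suc {F : HSeq Ω} (hF : F ∈ Suc Ω) {u : ℕ → Ω} {z : Ω}
    (hu : Tendsto u atTop (𝓝 z)) :
    Tendsto (fun n => (F n : C(Ω, ℂ)) (u n)) atTop (𝓝 0) := by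
  refine Metric.tendsto_nhds.mpr fun ε hε => ?_
  filter_upwards [Metric.tendstoUniformlyOn_iff.mp (hF _ hu.isCompact_insert_range) ε hε] with n hn
  rw [dist_comm]
  exact hn (u n) (.inr ⟨n, rfl⟩)

/-- The restriction to `Ω` of a polynomial function, as a holomorphic function. -/
def Hol.ofPolynomial (Ω : Set ℂ) (p : Polynomial ℂ) : Hol Ω :=
  ⟨p.toContinuousMapOn Ω, fun z => p.eval z, p.differentiableOn, fun _ => rfl⟩

/-- The sequence `n ↦ c n • p n` in `H(Ω)^ℕ` attached to scalars `c` and polynomials `p`. The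
algebra generators are of this form, with the same `p` for all of them. -/
def weightedSeq (Ω : Set ℂ) (p : ℕ → Polynomial ℂ) (c : ℕ → ℂ) : HSeq Ω :=
  fun n => c n • Hol.ofPolynomial Ω (p n)

lemma weightedSeq_apply (p : ℕ → Polynomial ℂ) (c : ℕ → ℂ) (n : ℕ) (z : Ω) :
    (weightedSeq Ω p c n : C(Ω, ℂ)) z = c n * (p n).eval (z : ℂ) := rfl

lemma weightedSeq_mem_Sp {p : ℕ → Polynomial ℂ} {c : ℕ → ℂ} {G : ℕ → ℝ} (hc : ∀ n, ‖c n‖ ≤ G n)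
    (hp : ∀ z ∈ Ω, Tendsto (fun n => G n * ‖(p n).eval z‖) atTop (𝓝 0)) :
    weightedSeq Ω p c ∈ Sp Ω := by
  refine fun z => squeeze_zero_norm (fun n => ?_) (hp z z.2)
  rw [weightedSeq_apply, norm_mul]
  gcongr
  exact hc n

lemma aeval_weightedSeq_notMem_Suc {v : ι → ℕ → ℕ} (hv : IsIndependentFamily v)
    {p : ℕ → Polynomial ℂ} {u : ℕ → Ω} {z : Ω} (hu : Tendsto u atTop (𝓝 z))
    (hpu : ∀ n, (p n).eval (u n : ℂ) = 1) {P : MvPolynomial ι ℂ} (hP : P ≠ 0) :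
    MvPolynomial.aeval (fun i => weightedSeq Ω p fun n => v i n) P ∉ Suc Ω := by
  intro hmem
  obtain ⟨c, hc, hfreq⟩ := hv.exists_frequently_eval_eq hP
  have hlim := tendsto_apply_of_mem_Suc hmem hu
  simp only [HSeq.aeval_apply, weightedSeq_apply, hpu, mul_one] at hlim
  exact hfreq (hlim.eventually_ne hc.symm)

lemma exists_family_mem_Sp_aeval_notMem_Suc (hΩ : (interior Ω).Nonempty) :
    ∃ f : (ℕ → Bool) → HSeq Ω, (∀ x, f x ∈ Sp Ω) ∧
      ∀ P : MvPolynomial (ℕ → Bool) ℂ, P ≠ 0 → MvPolynomial.aeval f P ∉ Suc Ω := by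
  obtain ⟨z, hz⟩ := hΩ
  lift z to Ω using interior_subset hz
  obtain ⟨u, hu, hlt⟩ := exists_seq_tendsto_lt_im hz
  obtain ⟨v, hv, hfin⟩ := exists_isIndependentFamily ℕ
  choose G hG using fun n => (hfin n).bddAbove
  have him : Tendsto (fun n => (u n : ℂ).im) atTop (𝓝 (z : ℂ).im) :=
    ((Complex.continuous_im.comp continuous_subtype_val).tendsto z).comp hu
  obtain ⟨p, hpu, hp⟩ := exists_polynomial_seq_eval_eq_one hlt him fun n => G n
  refine ⟨fun x => weightedSeq Ω p fun n => v x n, fun x => weightedSeq_mem_Sp (fun n => ?_)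
    fun w _ => hp w, fun P hP => aeval_weightedSeq_notMem_Suc hv hu hpu hP⟩
  rw [Complex.norm_natCast]
  exact_mod_cast hG n ⟨x, rfl⟩

lemma algebraicIndependent_of_aeval_notMem_Suc {f : ι → HSeq Ω}
    (hf : ∀ P : MvPolynomial ι ℂ, P ≠ 0 → MvPolynomial.aeval f P ∉ Suc Ω) :
    AlgebraicIndependent ℂ f := by
  refine algebraicIndependent_iff.mpr fun P hP => ?_
  by_contra hne
  exact hf P hne (hP ▸ zero_mem_Suc)

end HSeq

end

theorem Sp_diff_Suc_strongly_continuum_algebrable_general {Ω : Set ℂ}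
    (hΩ : (interior Ω).Nonempty) :
    ∃ B : Set (HSeq Ω), Cardinal.mk B = Cardinal.continuum ∧
      ∀ {σ : Type*} (b : σ → HSeq Ω), Function.Injective b → (∀ i, b i ∈ B) →
        ∀ P : MvPolynomial σ ℂ, P ≠ 0 → MvPolynomial.coeff 0 P = 0 →
          MvPolynomial.aeval b P ≠ 0 ∧ MvPolynomial.aeval b P ∈ Sp Ω \ Suc Ω := by
  obtain ⟨f, hfSp, hfSuc⟩ := exists_family_mem_Sp_aeval_notMem_Suc hΩ
  have hind : AlgebraicIndependent ℂ f := algebraicIndependent_of_aeval_notMem_Suc hfSuc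
  refine ⟨Set.range f, by simp [Cardinal.mk_range_eq f hind.injective],
    fun b hb hbB P hP hP0 => ?_⟩
  choose x hx using hbB
  obtain rfl : f ∘ x = b := funext hx
  have hSuc : MvPolynomial.aeval (f ∘ x) P ∉ Suc Ω := by
    rw [← MvPolynomial.aeval_rename]
    exact hfSuc _ ((MvPolynomial.rename_injective x hb.of_comp).ne_iff' (map_zero _) |>.mpr hP)
  exact ⟨fun h => hSuc (h ▸ zero_mem_Suc), aeval_mem_Sp (fun i => hfSp (x i)) hP0, hSuc⟩

/-- `S_p \ S_uc` is strongly `𝔠`-algebrable in `H(Ω)^ℕ`: there is a set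
`B ⊆ H(Ω)^ℕ` of cardinality `𝔠` such that for all `m ≥ 1`, all pairwise distinct
`b_1, …, b_m ∈ B` and every nonzero polynomial `P` in `m` variables with zero constant
term, `P(b_1, …, b_m)` (products taken coordinatewise) is a nonzero element of
`S_p \ S_uc`. -/
theorem Sp_diff_Suc_strongly_continuum_algebrable
    (Ω : Set ℂ) (hΩ : IsOpen Ω) (hne : Ω.Nonempty) :
    ∃ B : Set (HSeq Ω), Cardinal.mk B = Cardinal.continuum ∧
      ∀ (m : ℕ), 1 ≤ m → ∀ b : Fin m → HSeq Ω,
        Function.Injective b → (∀ i, b i ∈ B) →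
        ∀ P : MvPolynomial (Fin m) ℂ, P ≠ 0 → MvPolynomial.coeff 0 P = 0 →
          MvPolynomial.aeval b P ≠ 0 ∧ MvPolynomial.aeval b P ∈ Sp Ω \ Suc Ω := by
  obtain ⟨B, hcard, hB⟩ := Sp_diff_Suc_strongly_continuum_algebrable_general
    (hΩ.interior_eq.symm ▸ hne)
  exact ⟨B, hcard, fun m _ b => hB b⟩
end

section
/- Let Ω be a nonempty open subset of ℂ. Then the set S_p \ S_uc is infinitely pointwise 𝔠-dense-lineable in H(Ω)^ℕ: for every x ∈ S_p \ S_uc there exists a countable family {W_k : k ∈ ℕ} of vector subspaces of H(Ω)^ℕ such that each W_k is dense in H(Ω)^ℕ, each W_k has dimension 𝔠, x ∈ W_k ⊆ (S_p \ S_uc) ∪ {0} for every k, and W_k ∩ W_n = span{x} whenever k ≠ n. -/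
open Filter Topology

set_option synthInstance.maxHeartbeats 1000000
set_option maxHeartbeats 1000000

/-!
The set `D` of indices `n` at which `|x n|` is at least `ε` somewhere on a suitable compact set is
infinite, so it splits into infinitely many infinite pieces, `D ∩ π⁻¹{j}`. Multiplying `x n` by
`e ^ π n` with `‖e‖ ≤ 1` gives a new pointwise null sequence. A nontrivial linear combination of
such twists, for distinct `e`, is `x n` multiplied by `p (π n)`, where `p` is bounded and, geometric
sequences being linearly independent, nonzero at some `j`; so on `D ∩ π⁻¹{j}` it stays away from
zero. Finitely many initial terms may be prescribed freely without affecting any of this. As there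
are `𝔠` scalars in the unit disc and only `𝔠` sequences of holomorphic functions, each of
countably many disjoint families of twists can be made to contain every initial segment of every
sequence, which makes its span dense.
-/

open scoped Cardinal

universe u v

/-- A set `S` in a topological vector space is infinitely pointwise `κ`-dense-lineable if every
`x ∈ S` lies in countably many dense subspaces of dimension `κ` that are contained in `S ∪ {0}`
and pairwise meet in the line spanned by `x`. -/
def InfinitelyPointwiseDenseLineable (𝕜 : Type u) {V : Type v} [Semiring 𝕜] [AddCommMonoid V]
    [Module 𝕜 V] [TopologicalSpace V] (κ : Cardinal.{v}) (S : Set V) : Prop :=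
  ∀ x ∈ S, ∃ W : ℕ → Submodule 𝕜 V,
    (∀ k, Dense (W k : Set V)) ∧
    (∀ k, Module.rank 𝕜 (W k) = κ) ∧
    (∀ k, x ∈ W k) ∧
    (∀ k, (W k : Set V) ⊆ S ∪ {0}) ∧
    (∀ k n, k ≠ n → W k ⊓ W n = Submodule.span 𝕜 {x})

section BlockSpan

variable {𝕜 : Type u} {V : Type v} {κ I : Type*}

theorem span_image_inf_span_image [Ring 𝕜] [AddCommGroup V] [Module 𝕜 V]
    {b : I → V} (hb : LinearIndependent 𝕜 b) (s t : Set I) :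
    Submodule.span 𝕜 (b '' s) ⊓ Submodule.span 𝕜 (b '' t) = Submodule.span 𝕜 (b '' (s ∩ t)) := by
  simp only [Finsupp.span_image_eq_map_linearCombination, Finsupp.supported_inter,
    Submodule.map_inf _ hb]

theorem range_optionMap_prodMk_inter {k n : κ} (hkn : k ≠ n) :
    Set.range (Option.map (Prod.mk k : I → κ × I)) ∩ Set.range (Option.map (Prod.mk n)) =
      {none} := by
  ext (_ | p)
  · simp
  · simp only [Set.mem_inter_iff, Set.mem_range, Option.map_eq_some_iff]
    grind

/-- The span of `b none` together with the `k`-th block `b (some (k, ·))` of the family `b`. The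
blocks are disjoint and share only the vector indexed by `none`. -/
def blockSpan (𝕜 : Type u) [Semiring 𝕜] [AddCommMonoid V] [Module 𝕜 V]
    (b : Option (κ × I) → V) (k : κ) : Submodule 𝕜 V :=
  Submodule.span 𝕜 (b '' Set.range (Option.map (Prod.mk k)))

theorem none_mem_blockSpan [Semiring 𝕜] [AddCommMonoid V] [Module 𝕜 V]
    (b : Option (κ × I) → V) (k : κ) : b none ∈ blockSpan 𝕜 b k :=
  Submodule.subset_span ⟨none, ⟨none, rfl⟩, rfl⟩

theorem some_mem_blockSpan [Semiring 𝕜] [AddCommMonoid V] [Module 𝕜 V]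
    (b : Option (κ × I) → V) (k : κ) (i : I) : b (some (k, i)) ∈ blockSpan 𝕜 b k :=
  Submodule.subset_span ⟨some (k, i), ⟨some i, rfl⟩, rfl⟩

theorem dense_blockSpan [Semiring 𝕜] [AddCommMonoid V] [Module 𝕜 V] [TopologicalSpace V]
    {b : Option (κ × I) → V} {k : κ} (hb : DenseRange fun i => b (some (k, i))) :
    Dense (blockSpan 𝕜 b k : Set V) :=
  hb.mono (Set.range_subset_iff.mpr (some_mem_blockSpan b k))

theorem blockSpan_subset_union_zero [Semiring 𝕜] [AddCommMonoid V] [Module 𝕜 V]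
    {b : Option (κ × I) → V} {S : Set V}
    (hb : ∀ l : Option (κ × I) →₀ 𝕜, l ≠ 0 → Finsupp.linearCombination 𝕜 b l ∈ S) (k : κ) :
    (blockSpan 𝕜 b k : Set V) ⊆ S ∪ {0} := by
  intro y hy
  rw [blockSpan, SetLike.mem_coe, Finsupp.mem_span_image_iff_linearCombination] at hy
  obtain ⟨l, -, rfl⟩ := hy
  by_cases hl : l = 0
  · exact Or.inr (by simp [hl])
  · exact Or.inl (hb l hl)

theorem blockSpan_inf_blockSpan [Ring 𝕜] [AddCommGroup V] [Module 𝕜 V]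
    {b : Option (κ × I) → V} (hb : LinearIndependent 𝕜 b) {k n : κ} (hkn : k ≠ n) :
    blockSpan 𝕜 b k ⊓ blockSpan 𝕜 b n = Submodule.span 𝕜 {b none} := by
  rw [blockSpan, blockSpan, span_image_inf_span_image hb, range_optionMap_prodMk_inter hkn,
    Set.image_singleton]

theorem rank_blockSpan [Ring 𝕜] [StrongRankCondition 𝕜] [AddCommGroup V] [Module 𝕜 V]
    {I : Type v} [Infinite I] {b : Option (κ × I) → V} (hb : LinearIndependent 𝕜 b) (k : κ) :
    Module.rank 𝕜 (blockSpan 𝕜 b k) = #I := by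
  have := nontrivial_of_invariantBasisNumber 𝕜
  have hbk := hb.comp _ (Option.map_injective (Prod.mk_right_injective k))
  rw [blockSpan, ← Set.range_comp, rank_span hbk, Cardinal.mk_range_eq _ hbk.injective,
    Cardinal.mk_option, Cardinal.add_one_eq (Cardinal.aleph0_le_mk I)]

theorem linearIndependent_of_linearCombination_mem [Ring 𝕜] [AddCommGroup V] [Module 𝕜 V]
    {b : I → V} {S : Set V} (hS : 0 ∉ S)
    (hb : ∀ l : I →₀ 𝕜, l ≠ 0 → Finsupp.linearCombination 𝕜 b l ∈ S) : LinearIndependent 𝕜 b :=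
  linearIndependent_iff.mpr fun l hl => by_contra fun hne => hS (hl ▸ hb l hne)

end BlockSpan

theorem exists_forall_frequently_and_eq {P : ℕ → Prop} (hP : ∃ᶠ n in atTop, P n) :
    ∃ π : ℕ → ℕ, ∀ j, ∃ᶠ n in atTop, P n ∧ π n = j := by
  classical
  have hinf : {n | P n}.Infinite := Nat.frequently_atTop_iff_infinite.mp hP
  -- `π` sends the `N`-th index satisfying `P` to the first component of the pair coded by `N`.
  refine ⟨fun n => (Nat.unpair (Nat.count P n)).1, fun j => frequently_atTop.mpr fun m => ?_⟩
  refine ⟨Nat.nth P (Nat.pair j m), ?_, Nat.nth_mem_of_infinite hinf _, ?_⟩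
  · exact (Nat.right_le_pair j m).trans ((Nat.nth_strictMono hinf).id_le _)
  · simp [Nat.count_nth_of_infinite hinf]

theorem linearIndependent_geometric {R A : Type*} [CommRing R] [IsDomain R] {e : A → R}
    (he : Function.Injective e) : LinearIndependent R fun a (n : ℕ) => e a ^ n :=
  (linearIndependent_monoidHom (Multiplicative ℕ) R).comp
    (fun a => powersHom R (e a)) ((powersHom R).injective.comp he)

theorem norm_linearCombination_geometric_le {𝕜 A : Type*} [NormedField 𝕜] {e : A → 𝕜}
    (he : ∀ a, ‖e a‖ ≤ 1) (l : A →₀ 𝕜) (j : ℕ) :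
    ‖Finsupp.linearCombination 𝕜 (fun a (n : ℕ) => e a ^ n) l j‖ ≤ ∑ a ∈ l.support, ‖l a‖ := by
  simp only [Finsupp.linearCombination_apply, Finsupp.sum, Finset.sum_apply, Pi.smul_apply,
    smul_eq_mul]
  refine norm_sum_le_of_le _ fun a _ => ?_
  rw [norm_mul, norm_pow]
  exact mul_le_of_le_one_right (norm_nonneg _) (pow_le_one₀ (norm_nonneg _) (he a))

theorem exists_injective_option_norm_le_one (𝕜 : Type u) [NontriviallyNormedField 𝕜]
    [CompleteSpace 𝕜] {J : Type v} (hJ : #J ≤ 𝔠) :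
    ∃ e : Option J → 𝕜, Function.Injective e ∧ (∀ a, ‖e a‖ ≤ 1) ∧ e none = 1 := by
  have hball : 𝔠 ≤ #(Metric.ball (0 : 𝕜) 1) :=
    continuum_le_cardinal_of_isOpen 𝕜 Metric.isOpen_ball (Metric.nonempty_ball.mpr one_pos)
  have hle : Cardinal.lift.{u} #J ≤ Cardinal.lift.{v} #(Metric.ball (0 : 𝕜) 1) :=
    (Cardinal.lift_le_continuum.mpr hJ).trans (Cardinal.continuum_le_lift.mpr hball)
  obtain ⟨f⟩ := Cardinal.lift_mk_le'.mp hle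
  have hf (j : J) : ‖(f j : 𝕜)‖ < 1 := mem_ball_zero_iff.mp (f j).2
  refine ⟨fun a => a.elim 1 fun j => f j, ?_, ?_, rfl⟩
  · refine Option.injective_iff.mpr ⟨Subtype.val_injective.comp f.injective, ?_⟩
    rintro ⟨j, hj⟩
    exact (hf j).ne (by simpa using congrArg norm hj)
  · rintro (_ | j)
    · exact norm_one.le
    · exact (hf j).le

theorem denseRange_piecewise_Iio {Y : Type*} [TopologicalSpace Y] (g : ℕ → (ℕ → Y) → ℕ → Y) :
    DenseRange fun p : ℕ × (ℕ → Y) => (Set.Iio p.1).piecewise p.2 (g p.1 p.2) := by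
  intro y
  refine mem_closure_of_tendsto (b := atTop)
    (f := fun m => (Set.Iio m).piecewise y (g m y)) ?_
    (Eventually.of_forall fun m => ⟨(m, y), rfl⟩)
  refine tendsto_pi_nhds.mpr fun n => tendsto_const_nhds.congr' ?_
  filter_upwards [eventually_gt_atTop n] with m hm
  exact (Set.piecewise_eq_of_mem _ _ _ (Set.mem_Iio.mpr hm)).symm

theorem mk_continuousMap_le_continuum {X : Type u} {Y : Type v} [TopologicalSpace X]
    [TopologicalSpace.SeparableSpace X] [TopologicalSpace Y] [T2Space Y] (hY : #Y ≤ 𝔠) :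
    #C(X, Y) ≤ 𝔠 := by
  obtain ⟨D, hDc, hD⟩ := TopologicalSpace.exists_countable_dense X
  have hinj : Function.Injective fun (f : C(X, Y)) (d : D) => f d := fun f g h =>
    ContinuousMap.coe_injective (f.continuous.ext_on hD g.continuous fun d hd => congrFun h ⟨d, hd⟩)
  have hDY : #(D → Y) ≤ 𝔠 := calc
    #(D → Y) = Cardinal.lift.{u} #Y ^ Cardinal.lift.{v} #D := Cardinal.mk_arrow _ _
    _ ≤ 𝔠 ^ Cardinal.lift.{v} #D :=
      Cardinal.power_le_power_right (Cardinal.lift_le_continuum.mpr hY)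
    _ ≤ 𝔠 ^ ℵ₀ := Cardinal.power_le_power_left Cardinal.continuum_ne_zero
      (Cardinal.lift_le_aleph0.mpr hDc.le_aleph0)
    _ = 𝔠 := Cardinal.continuum_power_aleph0
  have hle := Cardinal.lift_mk_le_lift_mk_of_injective hinj
  simp only [Cardinal.lift_id] at hle
  exact hle.trans hDY

theorem mk_nat_prod_sequence {V : Type v} [Nontrivial V] (hV : #V ≤ 𝔠) : #(ℕ × (ℕ → V)) = 𝔠 := by
  have hseq : #(ℕ → V) = 𝔠 := by
    simpa using Cardinal.power_aleph0_of_le_continuum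
      (Cardinal.two_le_iff.mpr (exists_pair_ne V)) hV
  simp [hseq]

section TwistedSequence

variable {𝕜 : Type u} {V : Type v} {κ : Type*}

/-- The sequences `e ^ π n • x n` with finitely many terms replaced: the member with index
`some (k, m, y)` follows `y` before time `m`, and the index `none` stands for `x` itself. The label
`k` only serves to make the scalar `e (some (k, m, y))` differ between blocks. -/
def twistedSequence [Monoid 𝕜] [MulAction 𝕜 V] (x : ℕ → V) (π : ℕ → ℕ)
    (e : Option (κ × ℕ × (ℕ → V)) → 𝕜) : Option (κ × ℕ × (ℕ → V)) → ℕ → V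
  | none => x
  | some p => (Set.Iio p.2.1).piecewise p.2.2 fun n => e (some p) ^ π n • x n

theorem denseRange_twistedSequence [Monoid 𝕜] [MulAction 𝕜 V] [TopologicalSpace V] (x : ℕ → V)
    (π : ℕ → ℕ) (e : Option (κ × ℕ × (ℕ → V)) → 𝕜) (k : κ) :
    DenseRange fun p => twistedSequence x π e (some (k, p)) :=
  denseRange_piecewise_Iio fun m y n => e (some (k, m, y)) ^ π n • x n

theorem eventually_twistedSequence_eq [Monoid 𝕜] [MulAction 𝕜 V] (x : ℕ → V) (π : ℕ → ℕ)
    {e : Option (κ × ℕ × (ℕ → V)) → 𝕜} (he : e none = 1) (a : Option (κ × ℕ × (ℕ → V))) :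
    ∀ᶠ n in atTop, twistedSequence x π e a n = e a ^ π n • x n := by
  rcases a with _ | p
  · simp [twistedSequence, he]
  · filter_upwards [eventually_ge_atTop p.2.1] with n hn
    simp [twistedSequence, hn]

theorem eventually_linearCombination_twistedSequence_eq [Semiring 𝕜] [AddCommMonoid V] [Module 𝕜 V]
    (x : ℕ → V) (π : ℕ → ℕ) {e : Option (κ × ℕ × (ℕ → V)) → 𝕜} (he : e none = 1)
    (l : Option (κ × ℕ × (ℕ → V)) →₀ 𝕜) :
    ∀ᶠ n in atTop, Finsupp.linearCombination 𝕜 (twistedSequence x π e) l n =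
      Finsupp.linearCombination 𝕜 (fun a (j : ℕ) => e a ^ j) l (π n) • x n := by
  filter_upwards [(eventually_all_finset l.support).mpr fun a _ =>
    eventually_twistedSequence_eq x π he a] with n hn
  simp only [Finsupp.linearCombination_apply, Finsupp.sum, Finset.sum_apply, Pi.smul_apply,
    Finset.sum_smul, smul_assoc]
  exact Finset.sum_congr rfl fun a ha => by rw [hn a ha]

end TwistedSequence

section NullSequences

variable {𝕜 : Type u} {V : Type v} {X E : Type*} [NormedField 𝕜] [AddCommGroup V]
  [Module 𝕜 V] [SeminormedAddCommGroup E] [NormedSpace 𝕜 E]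

/-- The sequences in `V` tending to `0` pointwise, where `ι` interprets the elements of `V` as
`E`-valued functions on `X`. -/
def pointwiseNull (ι : V →ₗ[𝕜] X → E) : Set (ℕ → V) :=
  {F | ∀ z, Tendsto (fun n => ι (F n) z) atTop (𝓝 0)}

/-- The sequences in `V` tending to `0` uniformly on each member of `𝔖`, where `ι` interprets the
elements of `V` as `E`-valued functions on `X`. -/
def uniformlyNull (ι : V →ₗ[𝕜] X → E) (𝔖 : Set (Set X)) : Set (ℕ → V) :=
  {F | ∀ K ∈ 𝔖, TendstoUniformlyOn (fun n z => ι (F n) z) 0 atTop K}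

variable {ι : V →ₗ[𝕜] X → E} {𝔖 : Set (Set X)} {x y : ℕ → V} {π : ℕ → ℕ} {p : ℕ → 𝕜}

theorem zero_mem_uniformlyNull : 0 ∈ uniformlyNull ι 𝔖 := fun _ _ =>
  Metric.tendstoUniformlyOn_iff.mpr fun _ hε => Eventually.of_forall fun _ _ _ => by simpa using hε

theorem exists_frequently_le_norm_of_notMem_uniformlyNull (hx : x ∉ uniformlyNull ι 𝔖) :
    ∃ K ∈ 𝔖, ∃ ε > 0, ∃ᶠ n in atTop, ∃ z ∈ K, ε ≤ ‖ι (x n) z‖ := by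
  simp only [uniformlyNull, Set.mem_ofPred_eq, Metric.tendstoUniformlyOn_iff, not_forall] at hx
  simpa only [not_eventually, not_forall, not_lt, exists_prop, Pi.zero_apply, dist_zero_left]
    using hx

theorem mem_pointwiseNull_of_eventually_eq_smul (hx : x ∈ pointwiseNull ι) {C : ℝ}
    (hp : ∀ j, ‖p j‖ ≤ C) (hy : ∀ᶠ n in atTop, y n = p (π n) • x n) : y ∈ pointwiseNull ι := by
  intro z
  have hbdd : IsBoundedUnder (· ≤ ·) atTop (norm ∘ p ∘ π) := isBoundedUnder_of ⟨C, fun n => hp _⟩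
  refine (hbdd.smul_tendsto_zero (hx z)).congr' (hy.mono fun n hn => ?_)
  simp [hn]

theorem notMem_uniformlyNull_of_eventually_eq_smul {K : Set X} (hK : K ∈ 𝔖) {ε : ℝ} (hε : 0 < ε)
    (hπ : ∀ j, ∃ᶠ n in atTop, (∃ z ∈ K, ε ≤ ‖ι (x n) z‖) ∧ π n = j) (hp : p ≠ 0)
    (hy : ∀ᶠ n in atTop, y n = p (π n) • x n) : y ∉ uniformlyNull ι 𝔖 := by
  intro hnull
  obtain ⟨j, hj⟩ := Function.ne_iff.mp hp
  have hpos : 0 < ‖p j‖ := norm_pos_iff.mpr hj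
  have hsmall := Metric.tendstoUniformlyOn_iff.mp (hnull K hK) (‖p j‖ * ε) (by positivity)
  obtain ⟨n, ⟨⟨z, hz, hle⟩, rfl⟩, hn, hyn⟩ := ((hπ j).and_eventually (hsmall.and hy)).exists
  have hlt : ‖p (π n)‖ * ‖ι (x n) z‖ < ‖p (π n)‖ * ε := by
    simpa [hyn, norm_smul] using hn z hz
  exact hle.not_gt (lt_of_mul_lt_mul_left hlt hpos.le)

end NullSequences

section Lineability

variable {𝕜 : Type u} {V : Type v} {X E : Type*} [NontriviallyNormedField 𝕜] [CompleteSpace 𝕜]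
  [AddCommGroup V] [Module 𝕜 V] [SeminormedAddCommGroup E] [NormedSpace 𝕜 E]

theorem exists_linearCombination_twistedSequence_mem {κ : Type*} {ι : V →ₗ[𝕜] X → E}
    {𝔖 : Set (Set X)} {x : ℕ → V} (hcard : #(κ × ℕ × (ℕ → V)) ≤ 𝔠)
    (hx : x ∈ pointwiseNull ι \ uniformlyNull ι 𝔖) :
    ∃ (π : ℕ → ℕ) (e : Option (κ × ℕ × (ℕ → V)) → 𝕜), ∀ l : Option (κ × ℕ × (ℕ → V)) →₀ 𝕜, l ≠ 0 →
      Finsupp.linearCombination 𝕜 (twistedSequence x π e) l ∈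
        pointwiseNull ι \ uniformlyNull ι 𝔖 := by
  obtain ⟨K, hK, ε, hε, hlarge⟩ := exists_frequently_le_norm_of_notMem_uniformlyNull hx.2
  obtain ⟨π, hπ⟩ := exists_forall_frequently_and_eq hlarge
  obtain ⟨e, hinj, hnorm, hnone⟩ := exists_injective_option_norm_le_one 𝕜 hcard
  refine ⟨π, e, fun l hl => ?_⟩
  have hy := eventually_linearCombination_twistedSequence_eq x π hnone l
  have hp : Finsupp.linearCombination 𝕜 (fun a (j : ℕ) => e a ^ j) l ≠ 0 := fun h =>
    hl (linearIndependent_iff.mp (linearIndependent_geometric hinj) l h)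
  exact ⟨mem_pointwiseNull_of_eventually_eq_smul hx.1 (norm_linearCombination_geometric_le hnorm l)
    hy, notMem_uniformlyNull_of_eventually_eq_smul hK hε hπ hp hy⟩

theorem Sp_diff_Suc_infinitely_pointwise_continuum_dense_lineable_general
    [TopologicalSpace V] (hV : #V ≤ 𝔠) (ι : V →ₗ[𝕜] X → E) (𝔖 : Set (Set X)) :
    InfinitelyPointwiseDenseLineable 𝕜 𝔠 (pointwiseNull ι \ uniformlyNull ι 𝔖) := by
  intro x hx
  have h0 : 0 ∉ pointwiseNull ι \ uniformlyNull ι 𝔖 := fun h => h.2 zero_mem_uniformlyNull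
  obtain ⟨n, hn⟩ := Function.ne_iff.mp (ne_of_mem_of_not_mem hx h0)
  have : Nontrivial V := nontrivial_of_ne _ _ hn
  have hcard : #(ℕ × (ℕ → V)) = 𝔠 := mk_nat_prod_sequence hV
  obtain ⟨π, e, hmem⟩ :=
    exists_linearCombination_twistedSequence_mem (κ := ℕ) (by simp [hcard]) hx
  have hind := linearIndependent_of_linearCombination_mem h0 hmem
  exact ⟨blockSpan 𝕜 (twistedSequence x π e),
    fun k => dense_blockSpan (denseRange_twistedSequence x π e k),
    fun k => (rank_blockSpan hind k).trans hcard,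
    none_mem_blockSpan _,
    blockSpan_subset_union_zero hmem,
    fun _ _ => blockSpan_inf_blockSpan hind⟩

end Lineability

/-- The inclusion of `H(Ω)` into the functions on `Ω`. -/
noncomputable def holCoeFn (Ω : Set ℂ) : Hol Ω →ₗ[ℂ] Ω → ℂ :=
  (ContinuousMap.coeFnLinearMap ℂ).comp (Hol Ω).val.toLinearMap

theorem mk_Hol_le_continuum (Ω : Set ℂ) : #(Hol Ω) ≤ 𝔠 :=
  (Cardinal.mk_subtype_le _).trans (mk_continuousMap_le_continuum Cardinal.mk_complex.le)

/-- `S_p \ S_uc` is infinitely pointwise `𝔠`-dense-lineable in `H(Ω)^ℕ`. -/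
theorem Sp_diff_Suc_infinitely_pointwise_continuum_dense_lineable
    (Ω : Set ℂ) (hΩ : IsOpen Ω) (hne : Ω.Nonempty) :
    ∀ x ∈ Sp Ω \ Suc Ω, ∃ W : ℕ → Submodule ℂ (HSeq Ω),
      (∀ k, Dense (W k : Set (HSeq Ω))) ∧
      (∀ k, Module.rank ℂ (W k) = Cardinal.continuum) ∧
      (∀ k, x ∈ W k) ∧
      (∀ k, (W k : Set (HSeq Ω)) ⊆ (Sp Ω \ Suc Ω) ∪ {0}) ∧
      (∀ k n, k ≠ n → W k ⊓ W n = Submodule.span ℂ {x}) :=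
  show InfinitelyPointwiseDenseLineable ℂ 𝔠 (Sp Ω \ Suc Ω) from
    Sp_diff_Suc_infinitely_pointwise_continuum_dense_lineable_general (mk_Hol_le_continuum Ω)
      (holCoeFn Ω) {K | IsCompact K}
end

section
/- Let Ω be a nonempty open subset of ℂ and let f = (f_n) ∈ H(Ω)^ℕ. Suppose there exist m ∈ ℕ, a connected component Ω_i of Ω, and a closed infinite-dimensional vector subspace X_i of H(Ω_i) not containing the constant function 1, such that f_m is not identically zero on Ω_i. Set X = {λ + ψ ∈ H(Ω) : λ ∈ ℂ, the restriction of ψ to Ω_i belongs to X_i, and ψ is identically 0 on every connected component of Ω other than Ω_i}, and M(f) = {(f_n·φ)_{n∈ℕ} : φ ∈ X}. Then M(f) is a closed infinite-dimensional vector subspace of H(Ω)^ℕ that contains f. -/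
open Filter Topology

set_option synthInstance.maxHeartbeats 1000000
set_option maxHeartbeats 1000000

/-!
Let `U` be the component `Ω_i`. The zeros of `f_m` in `U` are isolated, so every point of `U` is the
centre of arbitrarily small circles on which `|f_m|` is bounded below, and the maximum principle
turns a bound for `f_m · ψ` on such a circle into a bound for `ψ` inside it. Since `H(U)` is
complete, multiplication by `f_m` is therefore a closed embedding of `H(U)` into itself.

The map `T : ψ ↦ (f_n · ψ)_n` from `H(U)` to `H(Ω)^ℕ`, where `ψ` is extended by zero, becomes this
multiplication when followed by restriction of the `m`-th entry to `U`; hence `T` is a closed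
embedding as well. Now `M(f) = T(X_i) + ℂ f` is the sum of a closed infinite-dimensional subspace
and a finite-dimensional one.
-/

instance isUniformAddGroup_continuousMap {α G : Type*} [TopologicalSpace α]
    [UniformSpace G] [AddGroup G] [IsUniformAddGroup G] : IsUniformAddGroup C(α, G) where
  uniformContinuous_sub := by
    have h := (ContinuousMap.isUniformEmbedding_toUniformOnFunIsCompact
      (α := α) (β := G)).isUniformInducing
    rw [h.uniformContinuous_iff]
    exact uniformContinuous_sub.comp (h.uniformContinuous.prodMap h.uniformContinuous)

theorem isOpen_diff_connectedComponentIn {α : Type*} [TopologicalSpace α]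
    [LocallyConnectedSpace α] {F : Set α} (hF : IsOpen F) (x : α) :
    IsOpen (F \ connectedComponentIn F x) := by
  refine isOpen_iff_mem_nhds.2 fun z hz => ?_
  filter_upwards [hF.connectedComponentIn.mem_nhds (mem_connectedComponentIn hz.1)] with y hy
  refine ⟨connectedComponentIn_subset F z hy, fun hyx => hz.2 ?_⟩
  rw [connectedComponentIn_eq hyx, ← connectedComponentIn_eq hy]
  exact mem_connectedComponentIn hz.1

namespace Hol

variable {U V : Set ℂ}

noncomputable instance : CoeFun (Hol U) fun _ => U → ℂ := ⟨fun φ => (φ : C(U, ℂ))⟩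

theorem ext {φ ψ : Hol U} (h : ∀ z : U, φ z = ψ z) : φ = ψ :=
  Subtype.ext (ContinuousMap.ext h)

/-- The extension of a function on `U` to the whole plane by the value `0`; it serves as the
canonical witness for the existential in the definition of `Hol`. -/
noncomputable def zeroExt (φ : U → ℂ) : ℂ → ℂ :=
  Function.extend (↑) φ 0

theorem zeroExt_of_mem (φ : U → ℂ) {z : ℂ} (hz : z ∈ U) : zeroExt φ z = φ ⟨z, hz⟩ :=
  Function.extend_val_apply hz

@[simp]
theorem zeroExt_coe (φ : U → ℂ) (z : U) : zeroExt φ z = φ z :=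
  zeroExt_of_mem φ z.2

theorem zeroExt_of_notMem (φ : U → ℂ) {z : ℂ} (hz : z ∉ U) : zeroExt φ z = 0 :=
  Function.extend_val_apply' hz

theorem mem_iff_differentiableOn_zeroExt {φ : C(U, ℂ)} :
    φ ∈ Hol U ↔ DifferentiableOn ℂ (zeroExt φ) U := by
  refine ⟨?_, fun h => ⟨_, h, fun z => (zeroExt_coe φ z).symm⟩⟩
  rintro ⟨g, hg, hφ⟩
  exact hg.congr fun z hz => (zeroExt_of_mem φ hz).trans (hφ ⟨z, hz⟩)

theorem differentiableOn_zeroExt (φ : Hol U) : DifferentiableOn ℂ (zeroExt φ) U :=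
  mem_iff_differentiableOn_zeroExt.1 φ.2

instance : IsUniformAddGroup (Hol U) :=
  IsUniformInducing.isUniformAddGroup (Hol U).toSubmodule.subtype
    isUniformEmbedding_subtype_val.isUniformInducing

theorem isClosed (hU : IsOpen U) : IsClosed (Hol U : Set C(U, ℂ)) := by
  have := hU.locallyCompactSpace
  refine isClosed_iff_forall_filter.2 fun φ F _ hF hφ => mem_iff_differentiableOn_zeroExt.2 ?_
  have hlim : TendstoLocallyUniformlyOn (fun ψ : C(U, ℂ) => zeroExt ψ) (zeroExt φ) F U := by
    rw [tendstoLocallyUniformlyOn_iff_tendstoLocallyUniformly_comp_coe]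
    simp only [Function.comp_def, zeroExt_coe]
    exact ContinuousMap.tendsto_iff_tendstoLocallyUniformly.1 (tendsto_id'.2 hφ)
  refine hlim.differentiableOn ?_ hU
  filter_upwards [le_principal_iff.1 hF] with ψ hψ using mem_iff_differentiableOn_zeroExt.1 hψ

theorem completeSpace (hU : IsOpen U) : CompleteSpace (Hol U) := by
  have := hU.locallyCompactSpace
  exact (isClosed hU).completeSpace_coe

theorem norm_le_of_forall_mem_sphere {z : ℂ} {r C : ℝ} (hr : r ≠ 0)
    (hzr : Metric.closedBall z r ⊆ U) {φ : Hol U}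
    (hφ : ∀ y : U, (y : ℂ) ∈ Metric.sphere z r → ‖φ y‖ ≤ C)
    {y : U} (hy : (y : ℂ) ∈ Metric.closedBall z r) : ‖φ y‖ ≤ C := by
  rw [← zeroExt_coe φ y]
  refine Complex.norm_le_of_forall_mem_frontier_norm_le (U := Metric.ball z r)
    Metric.isBounded_ball ?_ (fun x hx => ?_) (by rwa [closure_ball z hr])
  · refine DifferentiableOn.diffContOnCl ?_
    rw [closure_ball z hr]
    exact (differentiableOn_zeroExt φ).mono hzr
  · rw [frontier_ball z hr] at hx
    have hxU : x ∈ U := hzr (Metric.sphere_subset_closedBall hx)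
    simpa only [zeroExt_of_mem _ hxU] using hφ ⟨x, hxU⟩ hx

theorem eventually_codiscrete_ne_zero (hU : IsOpen U) (hc : IsPreconnected U) {f : Hol U}
    (hf : f ≠ 0) : ∀ᶠ z in codiscrete U, f z ≠ 0 := by
  rcases ((differentiableOn_zeroExt f).analyticOnNhd
    hU).eqOn_zero_or_eventually_ne_zero_of_preconnected hc with h | h
  · exact absurd (ext fun z => (zeroExt_coe f z).symm.trans (h z.2)) hf
  · refine mem_codiscrete_subtype_iff_mem_codiscreteWithin.2 ?_
    filter_upwards [h, self_mem_codiscreteWithin U] with z hz hzU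
    exact ⟨⟨z, hzU⟩, (zeroExt_of_mem f hzU).symm.trans_ne hz, rfl⟩

theorem exists_closedBall_forall_mem_sphere_ne_zero (hU : IsOpen U) {f : Hol U}
    (hf : ∀ᶠ z in codiscrete U, f z ≠ 0) (z : U) :
    ∃ r > 0, Metric.closedBall (z : ℂ) r ⊆ U ∧
      ∀ y : U, (y : ℂ) ∈ Metric.sphere (z : ℂ) r → f y ≠ 0 := by
  have hne := mem_codiscreteWithin_iff_forall_mem_nhdsNE.1
    (mem_codiscrete_subtype_iff_mem_codiscreteWithin.1 hf) z z.2
  obtain ⟨r, hr, hball⟩ := Metric.nhds_basis_closedBall.mem_iff.1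
    (inter_mem (mem_nhdsWithin_iff_eventually.1 hne) (hU.mem_nhds z.2))
  refine ⟨r, hr, fun y hy => (hball hy).2, fun y hy => ?_⟩
  rcases (hball (Metric.sphere_subset_closedBall hy)).1 (Metric.ne_of_mem_sphere hy hr.ne') with
    ⟨x, hx, hxy⟩ | hyU
  · exact Subtype.ext hxy ▸ hx
  · exact absurd y.2 hyU

theorem exists_forall_norm_le_of_norm_mul_le (hU : IsOpen U) {f : Hol U}
    (hf : ∀ᶠ z in codiscrete U, f z ≠ 0) (z : U) :
    ∃ K : Set U, IsCompact K ∧ ∃ N ∈ 𝓝 z, ∃ δ > 0, ∀ (φ : Hol U) (C : ℝ),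
      (∀ y ∈ K, ‖(f * φ) y‖ ≤ δ * C) → ∀ y ∈ N, ‖φ y‖ ≤ C := by
  obtain ⟨r, hr, hball, hne⟩ := exists_closedBall_forall_mem_sphere_ne_zero hU hf z
  have hK : IsCompact ((↑) ⁻¹' Metric.sphere (z : ℂ) r : Set U) :=
    (IsInducing.subtypeVal.isCompact_preimage_iff
      (by simpa using Metric.sphere_subset_closedBall.trans hball)).2 (isCompact_sphere _ _)
  obtain ⟨δ, hδ, hle⟩ := hK.exists_forall_le' (f := fun y => ‖f y‖) (a := 0)
    (f : C(U, ℂ)).continuous.norm.continuousOn fun y hy => norm_pos_iff.2 (hne y hy)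
  refine ⟨_, hK, _, continuousAt_subtype_val.preimage_mem_nhds (Metric.closedBall_mem_nhds _ hr),
    δ, hδ, fun φ C hφ y hy => norm_le_of_forall_mem_sphere hr.ne' hball (fun x hx => ?_) hy⟩
  refine le_of_mul_le_mul_left ?_ hδ
  calc δ * ‖φ x‖ ≤ ‖f x‖ * ‖φ x‖ := by gcongr; exact hle x hx
    _ = ‖(f * φ) x‖ := (norm_mul _ _).symm
    _ ≤ δ * C := hφ x hx

theorem isInducing_mulLeft (hU : IsOpen U) {f : Hol U} (hf : ∀ᶠ z in codiscrete U, f z ≠ 0) :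
    IsInducing (LinearMap.mulLeft ℂ f) := by
  have := hU.locallyCompactSpace
  rw [IsTopologicalAddGroup.isInducing_iff_nhds_zero]
  have hcont : Continuous (LinearMap.mulLeft ℂ f) := continuous_const_mul f
  refine le_antisymm (hcont.tendsto' 0 0 (map_zero _)).le_comap ?_
  set F := comap (LinearMap.mulLeft ℂ f) (𝓝 0)
  have hlim : Tendsto (fun φ => ((f * φ : Hol U) : C(U, ℂ))) F (𝓝 0) :=
    (continuous_subtype_val.tendsto (0 : Hol U)).comp tendsto_comap
  rw [ContinuousMap.tendsto_iff_forall_isCompact_tendstoUniformlyOn] at hlim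
  rw [nhds_subtype_eq_comap, ← tendsto_iff_comap,
    ContinuousMap.tendsto_iff_tendstoLocallyUniformly, Metric.tendstoLocallyUniformly_iff]
  intro ε hε z
  obtain ⟨K, hK, N, hN, δ, hδ, hbound⟩ := exists_forall_norm_le_of_norm_mul_le hU hf z
  refine ⟨N, hN, ?_⟩
  filter_upwards [Metric.tendstoUniformlyOn_iff.1 (hlim K hK) (δ * (ε / 2)) (by positivity)]
    with φ hφ y hy
  have hle : ‖φ y‖ ≤ ε / 2 := hbound φ _ (fun x hx => by
    simpa only [ContinuousMap.zero_apply, dist_zero_left] using (hφ x hx).le) y hy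
  simpa using hle.trans_lt (half_lt_self hε)

theorem isClosedEmbedding_mulLeft (hU : IsOpen U) {f : Hol U}
    (hf : ∀ᶠ z in codiscrete U, f z ≠ 0) : IsClosedEmbedding (LinearMap.mulLeft ℂ f) := by
  have := completeSpace hU
  exact (AddMonoidHom.isUniformEmbedding_of_isEmbedding
    (isInducing_mulLeft hU hf).isEmbedding).isClosedEmbedding

theorem continuous_holRestrict (hUV : U ⊆ V) : Continuous (holRestrict hUV) :=
  ((ContinuousMap.continuous_precomp ⟨Set.inclusion hUV, continuous_inclusion hUV⟩).comp
    continuous_subtype_val).subtype_mk _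

theorem differentiableOn_zeroExt_of_isOpen_diff (hU : IsOpen U) (hVU : IsOpen (V \ U))
    (φ : Hol U) : DifferentiableOn ℂ (zeroExt φ) V := by
  intro z hz
  refine DifferentiableAt.differentiableWithinAt ?_
  by_cases hzU : z ∈ U
  · exact (differentiableOn_zeroExt φ).differentiableAt (hU.mem_nhds hzU)
  · refine (differentiableAt_const 0).congr_of_eventuallyEq ?_
    filter_upwards [hVU.mem_nhds ⟨hz, hzU⟩] with y hy using zeroExt_of_notMem φ hy.2

variable (hU : IsOpen U) (hVU : IsOpen (V \ U))

/-- Extension by zero of holomorphic functions from an open set `U` to a set `V` in which the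
complement of `U` is open. -/
noncomputable def extendZero : Hol U →ₗ[ℂ] Hol V where
  toFun φ :=
    ⟨⟨V.domRestrict (zeroExt φ),
      (differentiableOn_zeroExt_of_isOpen_diff hU hVU φ).continuousOn.domRestrict⟩,
      zeroExt φ, differentiableOn_zeroExt_of_isOpen_diff hU hVU φ, fun _ => rfl⟩
  map_add' φ ψ := ext fun z => by
    by_cases hz : (z : ℂ) ∈ U <;> simp [zeroExt_of_mem, zeroExt_of_notMem, hz]
  map_smul' c φ := ext fun z => by
    by_cases hz : (z : ℂ) ∈ U <;> simp [zeroExt_of_mem, zeroExt_of_notMem, hz]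

theorem extendZero_apply (φ : Hol U) (z : V) : extendZero hU hVU φ z = zeroExt φ z :=
  rfl

theorem holRestrict_extendZero (hUV : U ⊆ V) (φ : Hol U) :
    holRestrict hUV (extendZero hU hVU φ) = φ :=
  ext (zeroExt_coe φ)

theorem extendZero_holRestrict (hUV : U ⊆ V) {ψ : Hol V}
    (hψ : ∀ z : V, (z : ℂ) ∉ U → ψ z = 0) :
    extendZero hU hVU (holRestrict hUV ψ) = ψ := by
  refine ext fun z => ?_
  rw [extendZero_apply]
  by_cases hz : (z : ℂ) ∈ U
  · exact zeroExt_of_mem _ hz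
  · rw [zeroExt_of_notMem _ hz, hψ z hz]

theorem continuous_extendZero : Continuous (extendZero hU hVU) := by
  have := hU.locallyCompactSpace
  refine Continuous.subtype_mk (ContinuousMap.continuous_of_continuous_uncurry _ ?_) _
  refine continuous_iff_continuousAt.2 fun ⟨φ, z⟩ => ?_
  by_cases hz : (z : ℂ) ∈ U
  · have hopen : IsOpen {p : Hol U × V | (p.2 : ℂ) ∈ U} := hU.preimage (by fun_prop)
    refine ContinuousOn.continuousAt ?_ (hopen.mem_nhds hz)
    rw [continuousOn_iff_continuous_domRestrict]
    have heval : Continuous fun p : {p : Hol U × V | (p.2 : ℂ) ∈ U} =>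
      p.1.1 ⟨p.1.2, p.2⟩ := by fun_prop
    exact heval.congr fun p => (zeroExt_of_mem p.1.1 p.2).symm
  · refine continuousAt_const.congr (f := fun _ => 0) ?_
    have hmem : {p : Hol U × V | (p.2 : ℂ) ∈ V \ U} ∈ 𝓝 (φ, z) :=
      (hVU.preimage (by fun_prop)).mem_nhds ⟨z.2, hz⟩
    filter_upwards [hmem] with p hp using (zeroExt_of_notMem p.1 hp.2).symm

/-- The space of all `λ + ψ`, where `λ` is a constant and `ψ` is the extension by zero of an element
of `X`. It is the space called `X` in the theorem, the present `X` being `X_i` there. -/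
noncomputable def constAdd (X : Submodule ℂ (Hol U)) : Submodule ℂ (Hol V) :=
  ℂ ∙ (1 : Hol V) ⊔ X.map (extendZero hU hVU)

theorem mem_constAdd_iff (hUV : U ⊆ V) {X : Submodule ℂ (Hol U)} {φ : Hol V} :
    φ ∈ constAdd hU hVU X ↔ ∃ (lam : ℂ) (ψ : Hol V), φ = algebraMap ℂ (Hol V) lam + ψ ∧
      holRestrict hUV ψ ∈ X ∧ ∀ z : V, (z : ℂ) ∉ U → ψ z = 0 := by
  rw [constAdd, Submodule.mem_sup]
  simp only [Submodule.mem_span_singleton, Submodule.mem_map, Algebra.algebraMap_eq_smul_one]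
  constructor
  · rintro ⟨_, ⟨lam, rfl⟩, _, ⟨χ, hχ, rfl⟩, rfl⟩
    refine ⟨lam, extendZero hU hVU χ, rfl, ?_, fun z hz => zeroExt_of_notMem χ hz⟩
    rwa [holRestrict_extendZero]
  · rintro ⟨lam, ψ, rfl, hψ, hψ₀⟩
    exact ⟨_, ⟨lam, rfl⟩, ψ, ⟨_, hψ, extendZero_holRestrict hU hVU hUV hψ₀⟩, rfl⟩

variable {ι : Type*}

/-- The multiplication operator `φ ↦ (f_n · φ)_n`. The space `M(f)` associated with a space `X` of
holomorphic functions is the image of `X` under `mulSeq f`. -/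
noncomputable def mulSeq (f : ι → Hol V) : Hol V →ₗ[ℂ] ι → Hol V :=
  LinearMap.pi fun n => LinearMap.mulLeft ℂ (f n)

theorem continuous_mulSeq (hV : IsOpen V) (f : ι → Hol V) : Continuous (mulSeq f) :=
  have := hV.locallyCompactSpace
  continuous_pi fun n => continuous_const_mul (f n)

theorem holRestrict_mulSeq_extendZero (hUV : U ⊆ V) (f : ι → Hol V) (m : ι) (φ : Hol U) :
    holRestrict hUV (mulSeq f (extendZero hU hVU φ) m) = holRestrict hUV (f m) * φ :=
  congrArg (holRestrict hUV (f m) * ·) (holRestrict_extendZero hU hVU hUV φ)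

theorem isClosedEmbedding_mulSeq_comp_extendZero (hUV : U ⊆ V) {f : ι → Hol V} {m : ι}
    (hf : ∀ᶠ z in codiscrete U, holRestrict hUV (f m) z ≠ 0) :
    IsClosedEmbedding (mulSeq f ∘ₗ extendZero hU hVU) := by
  have hV : IsOpen V := Set.union_sdiff_cancel hUV ▸ hU.union hVU
  have hT : Continuous (mulSeq f ∘ₗ extendZero hU hVU) :=
    (continuous_mulSeq hV f).comp (continuous_extendZero hU hVU)
  let ρ : (ι → Hol V) → Hol U := fun G => holRestrict hUV (G m)
  have hρ : Continuous ρ := (continuous_holRestrict hUV).comp (continuous_apply m)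
  have hρT : ρ ∘ (mulSeq f ∘ₗ extendZero hU hVU) = LinearMap.mulLeft ℂ (holRestrict hUV (f m)) :=
    funext (holRestrict_mulSeq_extendZero hU hVU hUV f m)
  have hemb : IsClosedEmbedding (ρ ∘ (mulSeq f ∘ₗ extendZero hU hVU)) :=
    hρT ▸ isClosedEmbedding_mulLeft hU hf
  exact .of_continuous_injective_isClosedMap hT hemb.injective.of_comp
    (isProperMap_of_comp_of_t2 hT hρ hemb.isProperMap).isClosedMap

theorem map_mulSeq_constAdd (f : ι → Hol V) (X : Submodule ℂ (Hol U)) :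
    (constAdd hU hVU X).map (mulSeq f) =
      X.map (mulSeq f ∘ₗ extendZero hU hVU) ⊔ ℂ ∙ f := by
  have h_one : mulSeq f 1 = f := funext fun n => mul_one (f n)
  rw [constAdd, Submodule.map_sup, Submodule.map_span, Set.image_singleton, h_one,
    ← Submodule.map_comp, sup_comm]

end Hol

theorem Mf_closed_infinite_dimensional_of_component_general {ι : Type*} {V U : Set ℂ}
    (hU : IsOpen U) (hVU : IsOpen (V \ U)) (hUV : U ⊆ V) (f : ι → Hol V) (m : ι)
    (X : Submodule ℂ (Hol U)) (hXclosed : IsClosed (X : Set (Hol U)))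
    (hXinf : ¬ Module.Finite ℂ X)
    (hfm : ∀ᶠ z in codiscrete U, holRestrict hUV (f m) z ≠ 0) :
    ∃ M : Submodule ℂ (ι → Hol V),
      (M : Set (ι → Hol V)) =
        {G | ∃ φ : Hol V,
          (∃ (lam : ℂ) (ψ : Hol V),
            φ = algebraMap ℂ (Hol V) lam + ψ ∧
            holRestrict hUV ψ ∈ X ∧
            ∀ z : V, (z : ℂ) ∉ U → ψ z = 0) ∧
          ∀ n, G n = f n * φ} ∧
      IsClosed (M : Set (ι → Hol V)) ∧ ¬ Module.Finite ℂ M ∧ f ∈ M := by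
  let T := Hol.mulSeq f ∘ₗ Hol.extendZero hU hVU
  have hT : IsClosedEmbedding T := Hol.isClosedEmbedding_mulSeq_comp_extendZero hU hVU hUV hfm
  refine ⟨X.map T ⊔ ℂ ∙ f, ?_, ?_, fun hfin => hXinf ?_, ?_⟩
  · ext G
    rw [← Hol.map_mulSeq_constAdd]
    simp only [SetLike.mem_coe, Submodule.mem_map, Hol.mem_constAdd_iff hU hVU hUV]
    exact exists_congr fun φ => and_congr_right fun _ => eq_comm.trans funext_iff
  · have hXT : IsClosed (X.map T : Set (ι → Hol V)) := hT.isClosedMap _ hXclosed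
    exact Submodule.isClosed_sup_finiteDimensional (𝕜 := ℂ) (E := ι → Hol V) _ _ hXT
  · have : Module.Finite ℂ (X.map T) :=
      Submodule.finiteDimensional_of_le (K := ℂ) (V := ι → Hol V) (le_sup_left (b := ℂ ∙ f))
    exact Module.Finite.equiv (X.equivMapOfInjective T hT.injective).symm
  · exact Submodule.mem_sup_right (Submodule.mem_span_singleton_self f)

/-- If `Ω_i` is a connected component of `Ω`, `X_i` is a closed
infinite-dimensional subspace of `H(Ω_i)` not containing the constant function `1`, and
`f_m` is not identically zero on `Ω_i`, then, for
`X = {λ + ψ : λ ∈ ℂ, ψ|_{Ω_i} ∈ X_i, ψ ≡ 0 on the other components}`,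
the set `M(f) = {(f_n·φ)_n : φ ∈ X}` is a closed infinite-dimensional vector subspace of
`H(Ω)^ℕ` containing `f`. -/
theorem Mf_closed_infinite_dimensional_of_component
    (Ω : Set ℂ) (hΩ : IsOpen Ω) (hne : Ω.Nonempty)
    (f : HSeq Ω) (m : ℕ) (w : ℂ) (hw : w ∈ Ω)
    (Ωi : Set ℂ) (hΩi : Ωi = connectedComponentIn Ω w) (hsub : Ωi ⊆ Ω)
    (Xi : Submodule ℂ (Hol Ωi))
    (hXiclosed : IsClosed (Xi : Set (Hol Ωi)))
    (hXiinf : ¬ Module.Finite ℂ Xi)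
    (hone : (1 : Hol Ωi) ∉ Xi)
    (hfm : holRestrict hsub (f m) ≠ 0) :
    ∃ M : Submodule ℂ (HSeq Ω),
      (M : Set (HSeq Ω)) =
        {G | ∃ φ : Hol Ω,
          (∃ (lam : ℂ) (ψ : Hol Ω),
            φ = algebraMap ℂ (Hol Ω) lam + ψ ∧
            holRestrict hsub ψ ∈ Xi ∧
            ∀ z : Ω, (z : ℂ) ∉ Ωi → (ψ : C(Ω, ℂ)) z = 0) ∧
          ∀ n, G n = f n * φ} ∧
      IsClosed (M : Set (HSeq Ω)) ∧ ¬ Module.Finite ℂ M ∧ f ∈ M := by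
  subst hΩi
  exact Mf_closed_infinite_dimensional_of_component_general hΩ.connectedComponentIn
    (isOpen_diff_connectedComponentIn hΩ w) hsub f m Xi hXiclosed hXiinf
    (Hol.eventually_codiscrete_ne_zero hΩ.connectedComponentIn
      isPreconnected_connectedComponentIn hfm)
end

section
/- Let Ω be a nonempty open subset of ℂ and let f = (f_n) ∈ H(Ω)^ℕ. Suppose there is a countably infinite family {S_k : k ∈ ℕ} of pairwise disjoint nonempty open subsets of Ω with Ω = ⋃_{k∈ℕ} S_k, such that for each k ∈ ℕ there exists m(k) ∈ ℕ with f_{m(k)} not identically zero on S_k. Set X = {∑_{k=1}^∞ c_k·χ_{S_k} : c_k ∈ ℂ for each k ∈ ℕ} (the functions on Ω that are constant on each S_k; each such function is holomorphic on Ω), and M(f) = {(f_n·φ)_{n∈ℕ} : φ ∈ X}. Then M(f) is a closed infinite-dimensional vector subspace of H(Ω)^ℕ that contains f. -/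
open Filter Topology

set_option synthInstance.maxHeartbeats 1000000
set_option maxHeartbeats 1000000

/-! Evaluating at the pairs `(n, z)` turns the space `M(f)` into the functions `g` on `ℕ × Ω` that
on each `ℕ × S_k` are a scalar multiple of `u (n, z) = f_n(z)`. Such `g` are cut out by the
equations `g s * u t = g t * u s`, for `s` and `t` over the same piece, and `g t = 0`, for
`u t = 0`. These involve only point values, so they define a closed set. The scalar over `S_k` is
arbitrary, and it is determined by `g` exactly when `u` does not vanish identically there, so the
dimension is finite exactly when there are finitely many such pieces. -/

section FiberMul

variable {𝕜 T κ : Type*} [Field 𝕜]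

/-- Multiplication of a fixed function `u` by functions constant on the fibers of `q`. Its range
consists of the functions that restrict to a scalar multiple of `u` on each fiber. -/
def fiberMul (u : T → 𝕜) (q : T → κ) : (κ → 𝕜) →ₗ[𝕜] (T → 𝕜) :=
  LinearMap.mulLeft 𝕜 u ∘ₗ LinearMap.funLeft 𝕜 𝕜 q

@[simp]
theorem fiberMul_apply (u : T → 𝕜) (q : T → κ) (c : κ → 𝕜) (t : T) :
    fiberMul u q c t = u t * c (q t) := rfl

theorem mem_range_fiberMul_iff {u g : T → 𝕜} {q : T → κ} :
    g ∈ LinearMap.range (fiberMul u q) ↔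
      (∀ t, u t = 0 → g t = 0) ∧ ∀ s t, q s = q t → g s * u t = g t * u s := by
  constructor
  · rintro ⟨c, rfl⟩
    refine ⟨fun t ht => by simp [ht], fun s t hst => ?_⟩
    simp only [fiberMul_apply, hst]
    ring
  · rintro ⟨hzero, hcross⟩
    have hscalar : ∀ k, ∃ c, ∀ t, q t = k → u t * c = g t := by
      intro k
      by_cases hk : ∃ s, q s = k ∧ u s ≠ 0
      · obtain ⟨s, rfl, hs⟩ := hk
        refine ⟨g s / u s, fun t ht => ?_⟩
        rw [← mul_div_assoc, div_eq_iff hs, mul_comm, hcross s t ht.symm]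
      · push Not at hk
        exact ⟨0, fun t ht => by rw [mul_zero, hzero t (hk t ht)]⟩
    choose c hc using hscalar
    exact ⟨c, funext fun t => hc (q t) t rfl⟩

theorem isClosed_range_fiberMul [TopologicalSpace 𝕜] [ContinuousMul 𝕜] [T2Space 𝕜]
    (u : T → 𝕜) (q : T → κ) :
    IsClosed (LinearMap.range (fiberMul u q) : Set (T → 𝕜)) := by
  have hrange : (LinearMap.range (fiberMul u q) : Set (T → 𝕜)) =
      {g | (∀ t, u t = 0 → g t = 0) ∧ ∀ s t, q s = q t → g s * u t = g t * u s} :=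
    Set.ext fun _ => mem_range_fiberMul_iff
  rw [hrange]
  simp only [Set.ofPred_and, Set.ofPred_forall]
  refine .inter (isClosed_iInter fun t => isClosed_iInter fun _ => ?_)
    (isClosed_iInter fun s => isClosed_iInter fun t => isClosed_iInter fun _ => ?_)
  · exact isClosed_eq (by fun_prop) (by fun_prop)
  · exact isClosed_eq (by fun_prop) (by fun_prop)

theorem ker_fiberMul (u : T → 𝕜) (q : T → κ) :
    LinearMap.ker (fiberMul u q) =
      LinearMap.ker (LinearMap.funLeft 𝕜 𝕜 ((↑) : q '' Function.support u → κ)) := by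
  ext c
  simp [funext_iff, LinearMap.funLeft_apply, or_iff_not_imp_left]

/-- A fiberwise multiple of `u` is parametrized by its scalars on the fibers on which `u` does not
vanish identically. -/
noncomputable def rangeFiberMulEquiv (u : T → 𝕜) (q : T → κ) :
    LinearMap.range (fiberMul u q) ≃ₗ[𝕜] (q '' Function.support u → 𝕜) :=
  (fiberMul u q).quotKerEquivRange.symm ≪≫ₗ
    Submodule.quotEquivOfEq _ _ (ker_fiberMul u q) ≪≫ₗ
    LinearMap.quotKerEquivOfSurjective _
      (LinearMap.funLeft_surjective_of_injective 𝕜 𝕜 _ Subtype.val_injective)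

theorem finite_pi_const_iff {ι : Type*} : Module.Finite 𝕜 (ι → 𝕜) ↔ Finite ι :=
  ⟨fun _ => by classical exact (Pi.linearIndependent_single_one ι 𝕜).finite, fun _ => inferInstance⟩

theorem finite_range_fiberMul_iff (u : T → 𝕜) (q : T → κ) :
    Module.Finite 𝕜 (LinearMap.range (fiberMul u q)) ↔ (q '' Function.support u).Finite :=
  (Module.Finite.equiv_iff (rangeFiberMulEquiv u q)).trans finite_pi_const_iff

end FiberMul

/-- For a family `a` of elements of an algebra and a subspace `X`, the space `M(a)` of all
families `(a n * x)_n` with `x ∈ X`. -/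
def multiplesBy {R A σ : Type*} [CommSemiring R] [Semiring A] [Algebra R A]
    (a : σ → A) (X : Submodule R A) : Submodule R (σ → A) :=
  X.map (LinearMap.pi fun n => LinearMap.mulLeft R (a n))

theorem mem_multiplesBy_iff {R A σ : Type*} [CommSemiring R] [Semiring A] [Algebra R A]
    {a g : σ → A} {X : Submodule R A} :
    g ∈ multiplesBy a X ↔ ∃ x ∈ X, ∀ n, g n = a n * x := by
  simp [multiplesBy, funext_iff, eq_comm]

section PiecewiseConstant

variable {𝕜 X σ κ : Type*} [Field 𝕜] [TopologicalSpace 𝕜] [IsTopologicalRing 𝕜]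
  [TopologicalSpace X] {A : Subalgebra 𝕜 C(X, 𝕜)} {U : κ → Set X}

variable (A U) in
/-- The elements of a function algebra that are constant on each of the sets `U k`. -/
def piecewiseConstant : Submodule 𝕜 A where
  carrier := {φ | ∀ k, ∃ c : 𝕜, ∀ x, x ∈ U k → (φ : C(X, 𝕜)) x = c}
  add_mem' hφ hψ k := by
    obtain ⟨c, hc⟩ := hφ k
    obtain ⟨d, hd⟩ := hψ k
    exact ⟨c + d, fun x hx => by simp [hc x hx, hd x hx]⟩
  zero_mem' _ := ⟨0, fun _ _ => rfl⟩
  smul_mem' r φ hφ k := by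
    obtain ⟨c, hc⟩ := hφ k
    exact ⟨r * c, fun x hx => by simp [hc x hx]⟩

theorem one_mem_piecewiseConstant : (1 : A) ∈ piecewiseConstant A U :=
  fun _ => ⟨1, fun _ _ => rfl⟩

theorem mem_piecewiseConstant_iff_exists_comp {q : X → κ} (hq : ∀ x k, x ∈ U k ↔ q x = k)
    {φ : A} : φ ∈ piecewiseConstant A U ↔ ∃ c : κ → 𝕜, ∀ x, (φ : C(X, 𝕜)) x = c (q x) := by
  constructor
  · intro hφ
    choose c hc using hφ
    exact ⟨c, fun x => hc (q x) x ((hq x _).mpr rfl)⟩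
  · rintro ⟨c, hc⟩ k
    exact ⟨c k, fun x hx => by rw [hc, (hq x k).mp hx]⟩

theorem exists_isLocallyConstant_index (hUopen : ∀ k, IsOpen (U k))
    (hUdisj : Pairwise (Function.onFun Disjoint U)) (hUcover : ⋃ k, U k = Set.univ) :
    ∃ q : X → κ, IsLocallyConstant q ∧ ∀ x k, x ∈ U k ↔ q x = k := by
  choose q hq using Set.iUnion_eq_univ_iff.mp hUcover
  have hmem : ∀ x k, x ∈ U k ↔ q x = k := fun x k =>
    ⟨fun hx => hUdisj.eq (Set.not_disjoint_iff.mpr ⟨x, hq x, hx⟩), fun h => h ▸ hq x⟩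
  exact ⟨q, (IsLocallyConstant.iff_exists_open q).mpr fun x =>
    ⟨U (q x), hUopen _, hq x, fun y hy => (hmem y _).mp hy⟩, hmem⟩

/-- A family of functions on `X`, viewed as one function of two variables. -/
def jointEval (σ : Type*) (A : Subalgebra 𝕜 C(X, 𝕜)) : (σ → A) →ₗ[𝕜] (σ × X → 𝕜) where
  toFun g p := (g p.1 : C(X, 𝕜)) p.2
  map_add' _ _ := rfl
  map_smul' _ _ := rfl

@[simp]
theorem jointEval_apply (g : σ → A) (p : σ × X) :
    jointEval σ A g p = (g p.1 : C(X, 𝕜)) p.2 := rfl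

theorem continuous_jointEval : Continuous (jointEval σ A) :=
  continuous_pi fun p => (ContinuousEvalConst.continuous_eval_const (F := C(X, 𝕜)) p.2).comp
    (continuous_subtype_val.comp (continuous_apply p.1))

theorem jointEval_injective : Function.Injective (jointEval σ A) := fun _ _ h =>
  funext fun n => Subtype.ext <| ContinuousMap.ext fun x => congrFun h (n, x)

theorem map_jointEval_multiplesBy
    (hA : ∀ g : C(X, 𝕜), IsLocallyConstant g → g ∈ A) {q : X → κ} (hqloc : IsLocallyConstant q)
    (hq : ∀ x k, x ∈ U k ↔ q x = k) (a : σ → A) :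
    (multiplesBy a (piecewiseConstant A U)).map (jointEval σ A) =
      LinearMap.range (fiberMul (jointEval σ A a) (q ∘ Prod.snd)) := by
  ext g
  constructor
  · rintro ⟨_, ⟨φ, hφ, rfl⟩, rfl⟩
    obtain ⟨c, hc⟩ := (mem_piecewiseConstant_iff_exists_comp hq).mp hφ
    exact ⟨c, funext fun p => by simp [hc]⟩
  · rintro ⟨c, rfl⟩
    have hloc : IsLocallyConstant (c ∘ q) := hqloc.comp c
    let φ : A := ⟨⟨c ∘ q, hloc.continuous⟩, hA _ hloc⟩
    have hφ : φ ∈ piecewiseConstant A U :=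
      (mem_piecewiseConstant_iff_exists_comp hq).mpr ⟨c, fun _ => rfl⟩
    exact ⟨fun n => a n * φ, mem_multiplesBy_iff.mpr ⟨φ, hφ, fun _ => rfl⟩, rfl⟩

theorem isClosed_multiplesBy_piecewiseConstant [T2Space 𝕜]
    (hA : ∀ g : C(X, 𝕜), IsLocallyConstant g → g ∈ A) (hUopen : ∀ k, IsOpen (U k))
    (hUdisj : Pairwise (Function.onFun Disjoint U)) (hUcover : ⋃ k, U k = Set.univ) (a : σ → A) :
    IsClosed (multiplesBy a (piecewiseConstant A U) : Set (σ → A)) := by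
  obtain ⟨q, hqloc, hq⟩ := exists_isLocallyConstant_index hUopen hUdisj hUcover
  rw [← Submodule.comap_map_eq_of_injective jointEval_injective (multiplesBy a _),
    map_jointEval_multiplesBy hA hqloc hq]
  exact (isClosed_range_fiberMul _ _).preimage continuous_jointEval

theorem finite_multiplesBy_piecewiseConstant_iff
    (hA : ∀ g : C(X, 𝕜), IsLocallyConstant g → g ∈ A) (hUopen : ∀ k, IsOpen (U k))
    (hUdisj : Pairwise (Function.onFun Disjoint U)) (hUcover : ⋃ k, U k = Set.univ) (a : σ → A) :
    Module.Finite 𝕜 (multiplesBy a (piecewiseConstant A U)) ↔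
      {k | ∃ n, ∃ x ∈ U k, (a n : C(X, 𝕜)) x ≠ 0}.Finite := by
  obtain ⟨q, hqloc, hq⟩ := exists_isLocallyConstant_index hUopen hUdisj hUcover
  have himage : (q ∘ Prod.snd) '' Function.support (jointEval σ A a) =
      {k | ∃ n, ∃ x ∈ U k, (a n : C(X, 𝕜)) x ≠ 0} := by
    ext k
    simp [hq, and_comm]
  rw [Module.Finite.equiv_iff (Submodule.equivMapOfInjective _ jointEval_injective _),
    map_jointEval_multiplesBy hA hqloc hq, finite_range_fiberMul_iff, himage]

end PiecewiseConstant

theorem mem_hol_of_isLocallyConstant {Ω : Set ℂ} (g : C(Ω, ℂ)) (hg : IsLocallyConstant g) :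
    g ∈ Hol Ω := by
  refine ⟨Function.extend (↑) g 0, fun z hz => ?_,
    fun z => (Subtype.val_injective.extend_apply g 0 z).symm⟩
  have hconst : Function.extend (↑) g 0 =ᶠ[𝓝[Ω] z] fun _ => g ⟨z, hz⟩ := by
    rw [nhdsWithin_eq_map_subtype_coe hz, EventuallyEq, eventually_map]
    filter_upwards [hg.eventually_eq ⟨z, hz⟩] with w hw
    rw [Subtype.val_injective.extend_apply, hw]
  exact (differentiableWithinAt_const _).congr_of_eventuallyEq_of_mem hconst hz

theorem Mf_closed_infinite_dimensional_of_partition_general {σ κ : Type*} {Ω : Set ℂ}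
    (f : σ → Hol Ω) (S : κ → Set ℂ) (hSopen : ∀ k, IsOpen (S k))
    (hSdisj : Pairwise (Function.onFun Disjoint S)) (hScover : Ω = ⋃ k, S k) :
    ∃ M : Submodule ℂ (σ → Hol Ω),
      (M : Set (σ → Hol Ω)) =
        {G | ∃ φ : Hol Ω,
          (∀ k, ∃ c : ℂ, ∀ z : Ω, (z : ℂ) ∈ S k → (φ : C(Ω, ℂ)) z = c) ∧
          ∀ n, G n = f n * φ} ∧
      IsClosed (M : Set (σ → Hol Ω)) ∧
      (Module.Finite ℂ M ↔
        {k | ∃ m, ∃ z : Ω, (z : ℂ) ∈ S k ∧ (f m : C(Ω, ℂ)) z ≠ 0}.Finite) ∧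
      f ∈ M := by
  let U : κ → Set Ω := fun k => (↑) ⁻¹' S k
  have hUopen : ∀ k, IsOpen (U k) := fun k => (hSopen k).preimage continuous_subtype_val
  have hUdisj : Pairwise (Function.onFun Disjoint U) := fun _ _ hjk => (hSdisj hjk).preimage _
  have hUcover : ⋃ k, U k = Set.univ := by
    rw [← Set.preimage_iUnion, ← hScover, Subtype.coe_preimage_self]
  exact ⟨multiplesBy f (piecewiseConstant (Hol Ω) U), Set.ext fun _ => mem_multiplesBy_iff,
    isClosed_multiplesBy_piecewiseConstant mem_hol_of_isLocallyConstant hUopen hUdisj hUcover f,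
    finite_multiplesBy_piecewiseConstant_iff mem_hol_of_isLocallyConstant hUopen hUdisj hUcover f,
    mem_multiplesBy_iff.mpr ⟨1, one_mem_piecewiseConstant, fun n => (mul_one (f n)).symm⟩⟩

/-- If `Ω` is partitioned into countably many pairwise disjoint nonempty
open sets `S_k`, on each of which some `f_{m(k)}` is not identically zero, then, for
`X` the set of holomorphic functions on `Ω` that are constant on each `S_k`,
the set `M(f) = {(f_n·φ)_n : φ ∈ X}` is a closed infinite-dimensional vector subspace of
`H(Ω)^ℕ` containing `f`. -/
theorem Mf_closed_infinite_dimensional_of_partition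
    (Ω : Set ℂ) (hΩ : IsOpen Ω) (hne : Ω.Nonempty)
    (f : HSeq Ω)
    (S : ℕ → Set ℂ)
    (hSopen : ∀ k, IsOpen (S k))
    (hSne : ∀ k, (S k).Nonempty)
    (hSdisj : ∀ j k, j ≠ k → Disjoint (S j) (S k))
    (hScover : Ω = ⋃ k, S k)
    (hfm : ∀ k, ∃ m : ℕ, ∃ z : Ω, (z : ℂ) ∈ S k ∧ (f m : C(Ω, ℂ)) z ≠ 0) :
    ∃ M : Submodule ℂ (HSeq Ω),
      (M : Set (HSeq Ω)) =
        {G | ∃ φ : Hol Ω,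
          (∀ k, ∃ c : ℂ, ∀ z : Ω, (z : ℂ) ∈ S k → (φ : C(Ω, ℂ)) z = c) ∧
          ∀ n, G n = f n * φ} ∧
      IsClosed (M : Set (HSeq Ω)) ∧ ¬ Module.Finite ℂ M ∧ f ∈ M := by
  obtain ⟨M, hM, hclosed, hfinite, hf⟩ :=
    Mf_closed_infinite_dimensional_of_partition_general f S hSopen (fun j k => hSdisj j k) hScover
  refine ⟨M, hM, hclosed, fun h => Set.infinite_univ (α := ℕ) ?_, hf⟩
  exact (hfinite.mp h).subset fun k _ => hfm k
end

section
/- Let Ω be a nonempty open subset of ℂ. Then the set S_p \ S_uc is pointwise spaceable in H(Ω)^ℕ: for every f ∈ S_p \ S_uc there exists a closed infinite-dimensional vector subspace M of H(Ω)^ℕ such that f ∈ M and M \ {0} ⊆ S_p \ S_uc. -/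
open Filter Topology

set_option synthInstance.maxHeartbeats 1000000
set_option maxHeartbeats 1000000

/-! Fix `f ∈ S_p \ S_uc`, a compact set on which `f` does not tend uniformly to `0`, and a partition
of `ℕ` into infinitely many blocks along each of which this failure persists. Multiplying `f` by a
bounded sequence of scalars constant on the blocks stays in `S_p`, and leaves `S_uc` unless the
sequence vanishes. To get a closed subspace, the scalars are read off from one coordinate: choose
`m` and `ζ` with `f m ζ ≠ 0`, and points `w i → ζ`. A function `g` in the `m`-th coordinate forces
the scalar `g (w i) / f m (w i)` on the `i`-th block; these scalars are bounded since they converge,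
determine `g` near `ζ` by the identity theorem, and are all equal to `1` for `g = f m`. -/

/-- The continuous linear map sending `g` to the sequence with `m`-th coordinate `g` and `n`-th
coordinate `ψ n g • f n` for `n ≠ m`. Its images of closed subspaces provide the closed subspaces
of sequences constructed here, since the `m`-th projection is a left inverse. -/
def multiplierMap {ι 𝕜 E : Type*} [DecidableEq ι] [CommSemiring 𝕜] [TopologicalSpace 𝕜]
    [AddCommMonoid E] [TopologicalSpace E] [Module 𝕜 E] [ContinuousSMul 𝕜 E]
    (f : ι → E) (m : ι) (ψ : ι → E →L[𝕜] 𝕜) : E →L[𝕜] (ι → E) :=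
  .pi (Function.update (fun n => (ψ n).smulRight (f n)) m (.id 𝕜 E))

section multiplierMap

variable {ι 𝕜 E : Type*} [DecidableEq ι] [CommSemiring 𝕜] [TopologicalSpace 𝕜]
  [AddCommMonoid E] [TopologicalSpace E] [Module 𝕜 E] [ContinuousSMul 𝕜 E]
  {f : ι → E} {m : ι} {ψ : ι → E →L[𝕜] 𝕜}

lemma multiplierMap_apply_self (g : E) : multiplierMap f m ψ g m = g := by
  simp [multiplierMap]

lemma multiplierMap_apply_of_ne {n : ι} (hn : n ≠ m) (g : E) :
    multiplierMap f m ψ g n = ψ n g • f n := by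
  simp [multiplierMap, hn]

lemma leftInverse_multiplierMap :
    Function.LeftInverse (fun F : ι → E => F m) (multiplierMap f m ψ) :=
  multiplierMap_apply_self

lemma multiplierMap_eq_self (hψ : ∀ n, ψ n (f m) = 1) : multiplierMap f m ψ (f m) = f := by
  ext n
  obtain rfl | hn := eq_or_ne n m
  · exact multiplierMap_apply_self _
  · rw [multiplierMap_apply_of_ne hn, hψ, one_smul]

lemma isClosed_map_multiplierMap [T2Space E] {V : Submodule 𝕜 E} (hV : IsClosed (V : Set E)) :
    IsClosed (V.map (multiplierMap f m ψ).toLinearMap : Set (ι → E)) :=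
  (leftInverse_multiplierMap.isClosedEmbedding (continuous_apply m)
    (multiplierMap f m ψ).continuous).isClosedMap _ hV

lemma not_finite_map_multiplierMap {V : Submodule 𝕜 E} (hV : ¬ Module.Finite 𝕜 V) :
    ¬ Module.Finite 𝕜 (V.map (multiplierMap f m ψ).toLinearMap) := fun _ =>
  hV <| .equiv (V.equivMapOfInjective (multiplierMap f m ψ).toLinearMap
    leftInverse_multiplierMap.injective).symm

end multiplierMap

lemma exists_partition_frequently {P : ℕ → Prop} (hP : ∃ᶠ n in atTop, P n) :
    ∃ j : ℕ → ℕ, ∀ i, ∃ᶠ n in atTop, j n = i ∧ P n := by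
  classical
  have hinf : {n | P n}.Infinite := Nat.frequently_atTop_iff_infinite.1 hP
  -- The `k`-th element of `{n | P n}` is put into the block given by the first entry of the pair
  -- encoded by `k`.
  refine ⟨fun n => (Nat.unpair (Nat.count P n)).1, fun i => frequently_atTop.2 fun N => ?_⟩
  refine ⟨Nat.nth P (Nat.pair i N), ?_, ?_, Nat.nth_mem_of_infinite hinf _⟩
  · exact (Nat.right_le_pair i N).trans (Nat.nth_strictMono hinf).le_apply
  · simp [Nat.count_nth_of_infinite hinf]

section Convergence

variable {Ω : Set ℂ} {f F : HSeq Ω}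

lemma notMem_Suc_iff : f ∉ Suc Ω ↔ ∃ K : Set Ω, IsCompact K ∧ ∃ ε > 0,
    ∃ᶠ n in atTop, ∃ z ∈ K, ε ≤ ‖(f n : C(Ω, ℂ)) z‖ := by
  simp [Suc, Metric.tendstoUniformlyOn_iff, Filter.Frequently]

lemma mem_Sp_of_eventuallyEq_smul (hf : f ∈ Sp Ω) {a : ℕ → ℂ}
    (ha : atTop.IsBoundedUnder (· ≤ ·) (norm ∘ a)) (hF : ∀ᶠ n in atTop, F n = a n • f n) :
    F ∈ Sp Ω := by
  intro z
  refine (ha.smul_tendsto_zero (hf z)).congr' ?_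
  filter_upwards [hF] with n hn
  simp [hn]

lemma notMem_Suc_of_frequently_eq_smul {K : Set Ω} (hK : IsCompact K) {ε : ℝ} (hε : 0 < ε)
    {c : ℂ} (hc : c ≠ 0)
    (hF : ∃ᶠ n in atTop, F n = c • f n ∧ ∃ z ∈ K, ε ≤ ‖(f n : C(Ω, ℂ)) z‖) : F ∉ Suc Ω := by
  refine notMem_Suc_iff.2 ⟨K, hK, ‖c‖ * ε, by positivity, hF.mono ?_⟩
  rintro n ⟨hn, z, hz, hle⟩
  refine ⟨z, hz, ?_⟩
  simpa [hn] using mul_le_mul_of_nonneg_left hle (norm_nonneg c)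

end Convergence

lemma isOpen_sdiff_connectedComponentIn {X : Type*} [TopologicalSpace X]
    [LocallyConnectedSpace X] {U : Set X} (hU : IsOpen U) (x : X) :
    IsOpen (U \ connectedComponentIn U x) := by
  refine isOpen_iff_mem_nhds.2 fun y hy => ?_
  filter_upwards [hU.connectedComponentIn.mem_nhds (mem_connectedComponentIn hy.1)] with z hz
  refine ⟨connectedComponentIn_subset _ _ hz, fun hz' => hy.2 ?_⟩
  rw [connectedComponentIn_eq hz', ← connectedComponentIn_eq hz]
  exact mem_connectedComponentIn hy.1

lemma differentiableOn_piecewise {𝕜 E F : Type*} [NontriviallyNormedField 𝕜]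
    [NormedAddCommGroup E] [NormedSpace 𝕜 E] [NormedAddCommGroup F] [NormedSpace 𝕜 F]
    {U C : Set E} [∀ x, Decidable (x ∈ C)] {f g : E → F} (hC : IsOpen C) (hUC : IsOpen (U \ C))
    (hf : DifferentiableOn 𝕜 f C) (hg : DifferentiableOn 𝕜 g (U \ C)) :
    DifferentiableOn 𝕜 (C.piecewise f g) U := by
  have hf' : DifferentiableOn 𝕜 (C.piecewise f g) C := hf.congr (C.piecewise_eqOn f g)
  have hg' : DifferentiableOn 𝕜 (C.piecewise f g) (U \ C) :=
    hg.congr fun _ hx => C.piecewise_eqOn_compl f g hx.2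
  exact (hf'.union_of_isOpen hg' hC hUC).mono (by simp)

lemma map_nhdsNE_of_isOpenEmbedding {X Y : Type*} [TopologicalSpace X] [TopologicalSpace Y]
    {e : X → Y} (he : IsOpenEmbedding e) (x : X) : map e (𝓝[≠] x) = 𝓝[≠] (e x) := by
  rw [← he.map_nhdsWithin_preimage_eq, Set.preimage_compl,
    ← Set.image_singleton, he.injective.preimage_image]

namespace Hol

variable {Ω C : Set ℂ} {ζ : Ω}

/-- Evaluation at a point, as a continuous linear functional on `H(Ω)`. -/
noncomputable def eval (z : Ω) : Hol Ω →L[ℂ] ℂ :=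
  (ContinuousMap.evalCLM ℂ z).comp (Hol Ω).toSubmodule.subtypeL

@[simp]
lemma eval_apply (z : Ω) (g : Hol Ω) : eval z g = (g : C(Ω, ℂ)) z := rfl

lemma eqOn_zero_connectedComponentIn (hΩ : IsOpen Ω) {g : Hol Ω}
    (hg : ∃ᶠ z in 𝓝[≠] ζ, (g : C(Ω, ℂ)) z = 0) {z : Ω}
    (hz : (z : ℂ) ∈ connectedComponentIn Ω ζ) : (g : C(Ω, ℂ)) z = 0 := by
  obtain ⟨G, hG, hgG⟩ := g.2
  have hG_an : AnalyticOnNhd ℂ G (connectedComponentIn Ω ζ) :=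
    (hG.mono (connectedComponentIn_subset _ _)).analyticOnNhd hΩ.connectedComponentIn
  have hG_zero : ∃ᶠ w in 𝓝[≠] (ζ : ℂ), G w = 0 := by
    rw [← map_nhdsNE_of_isOpenEmbedding hΩ.isOpenEmbedding_subtypeVal, frequently_map]
    exact hg.mono fun w hw => by rw [← hgG, hw]
  rw [hgG]
  exact hG_an.eqOn_zero_of_preconnected_of_frequently_eq_zero isPreconnected_connectedComponentIn
    (mem_connectedComponentIn ζ.2) hG_zero hz

/-- The functions proportional to `f` outside `C`, with factor the quotient of the values at `ζ`
(written without division). For disconnected `Ω` and `C` the component of `ζ`, this closed subspace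
contains `f`, and its elements are determined by their restrictions to `C`. -/
noncomputable def proportionalOff (C : Set ℂ) (f : Hol Ω) (ζ : Ω) : Submodule ℂ (Hol Ω) :=
  ⨅ z : Ω, ⨅ _ : (z : ℂ) ∉ C,
    ((f : C(Ω, ℂ)) ζ • (eval z).toLinearMap).eqLocus ((f : C(Ω, ℂ)) z • (eval ζ).toLinearMap)

lemma mem_proportionalOff {f g : Hol Ω} : g ∈ proportionalOff C f ζ ↔ ∀ z : Ω, (z : ℂ) ∉ C →
    (f : C(Ω, ℂ)) ζ * (g : C(Ω, ℂ)) z = (f : C(Ω, ℂ)) z * (g : C(Ω, ℂ)) ζ := by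
  simp [proportionalOff, Submodule.mem_iInf, LinearMap.mem_eqLocus]

lemma self_mem_proportionalOff (C : Set ℂ) (f : Hol Ω) (ζ : Ω) : f ∈ proportionalOff C f ζ :=
  mem_proportionalOff.2 fun _ _ => mul_comm _ _

lemma isClosed_proportionalOff (C : Set ℂ) (f : Hol Ω) (ζ : Ω) :
    IsClosed (proportionalOff C f ζ : Set (Hol Ω)) := by
  simp only [proportionalOff, Submodule.coe_iInf]
  exact isClosed_iInter fun z => isClosed_iInter fun _ => isClosed_eq
    (continuous_const.mul (eval z).continuous) (continuous_const.mul (eval ζ).continuous)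

lemma eq_zero_of_mem_proportionalOff {f g : Hol Ω} (hg : g ∈ proportionalOff C f ζ)
    (hζ : (ζ : ℂ) ∈ C) (hf : (f : C(Ω, ℂ)) ζ ≠ 0)
    (hgC : ∀ z : Ω, (z : ℂ) ∈ C → (g : C(Ω, ℂ)) z = 0) : g = 0 := by
  ext z
  by_cases hz : (z : ℂ) ∈ C
  · exact hgC z hz
  · simpa [hgC ζ hζ, hf] using mem_proportionalOff.1 hg z hz

lemma exists_eq_on_and_eq_const_off (hC : IsOpen C) (hΩC : IsOpen (Ω \ C)) (c : ℂ) :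
    ∃ s : Hol Ω, (∀ z : Ω, (z : ℂ) ∈ C → (s : C(Ω, ℂ)) z = z) ∧
      ∀ z : Ω, (z : ℂ) ∉ C → (s : C(Ω, ℂ)) z = c := by
  classical
  have hs : DifferentiableOn ℂ (C.piecewise id fun _ => c) Ω :=
    differentiableOn_piecewise hC hΩC differentiableOn_id (differentiableOn_const c)
  let s : Hol Ω := ⟨⟨Ω.domRestrict (C.piecewise id fun _ => c), hs.continuousOn.domRestrict⟩,
    _, hs, fun _ => rfl⟩
  exact ⟨s, fun z hz => C.piecewise_eq_of_mem id (fun _ => c) hz,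
    fun z hz => C.piecewise_eq_of_notMem id (fun _ => c) hz⟩

lemma aeval_apply (s : Hol Ω) (p : Polynomial ℂ) (z : Ω) :
    ((Polynomial.aeval s p : Hol Ω) : C(Ω, ℂ)) z = p.eval ((s : C(Ω, ℂ)) z) := by
  rw [Polynomial.aeval_subalgebra_coe, Polynomial.aeval_continuousMap_apply]

lemma infinite_setOf_mem_and_ne_zero (hΩ : IsOpen Ω) (hC : IsOpen C) (hζ : (ζ : ℂ) ∈ C)
    {f : Hol Ω} (hf : (f : C(Ω, ℂ)) ζ ≠ 0) :
    (Subtype.val '' {z : Ω | (z : ℂ) ∈ C ∧ (f : C(Ω, ℂ)) z ≠ 0}).Infinite := by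
  refine infinite_of_mem_nhds (ζ : ℂ) (hΩ.isOpenMap_subtype_val.image_mem_nhds ?_)
  exact inter_mem ((hC.preimage continuous_subtype_val).mem_nhds hζ)
    ((f : C(Ω, ℂ)).continuous.continuousAt.eventually_ne hf)

lemma not_finite_proportionalOff (hΩ : IsOpen Ω) (hC : IsOpen C) (hΩC : IsOpen (Ω \ C))
    (hζ : (ζ : ℂ) ∈ C) {f : Hol Ω} (hf : (f : C(Ω, ℂ)) ζ ≠ 0) :
    ¬ Module.Finite ℂ (proportionalOff C f ζ) := by
  intro _
  obtain ⟨s, hsC, hs_off⟩ := exists_eq_on_and_eq_const_off hC hΩC (ζ : ℂ)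
  -- Polynomials in `s` are constant outside `C`, so their multiples of `f` are admissible there.
  let T : Polynomial ℂ →ₗ[ℂ] Hol Ω := LinearMap.mulRight ℂ f ∘ₗ (Polynomial.aeval s).toLinearMap
  have hT (p : Polynomial ℂ) (z : Ω) :
      (T p : C(Ω, ℂ)) z = p.eval ((s : C(Ω, ℂ)) z) * (f : C(Ω, ℂ)) z := by
    simp [T, aeval_apply]
  have hT_mem (p : Polynomial ℂ) : T p ∈ proportionalOff C f ζ := by
    refine mem_proportionalOff.2 fun z hz => ?_
    rw [hT, hT, hs_off z hz, hsC ζ hζ]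
    ring
  have hT_inj : Function.Injective T := by
    refine (injective_iff_map_eq_zero T).2 fun p hp => p.eq_zero_of_infinite_isRoot <|
      (infinite_setOf_mem_and_ne_zero hΩ hC hζ hf).mono ?_
    rintro _ ⟨z, ⟨hzC, hfz⟩, rfl⟩
    simpa [hp, hsC z hzC, hfz] using hT p z
  have hT_indep := (Polynomial.basisMonomials ℂ).linearIndependent.map_injOn
    (T.codRestrict _ hT_mem) fun p _ q _ hpq => hT_inj (congrArg Subtype.val hpq)
  exact Module.Finite.not_linearIndependent_of_infinite _ hT_indep

lemma exists_submodule_and_separating_functionals (hΩ : IsOpen Ω) {f : Hol Ω}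
    (hf : (f : C(Ω, ℂ)) ζ ≠ 0) :
    ∃ (V : Submodule ℂ (Hol Ω)) (ψ : ℕ → Hol Ω →L[ℂ] ℂ),
      IsClosed (V : Set (Hol Ω)) ∧ ¬ Module.Finite ℂ V ∧ f ∈ V ∧ (∀ i, ψ i f = 1) ∧
      (∀ g, ∃ B, ∀ i, ‖ψ i g‖ ≤ B) ∧ ∀ g ∈ V, (∀ i, ψ i g = 0) → g = 0 := by
  have hζ : (ζ : ℂ) ∈ connectedComponentIn Ω ζ := mem_connectedComponentIn ζ.2
  have : NeBot (𝓝[≠] ζ) := by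
    rw [← map_neBot_iff Subtype.val, map_nhdsNE_of_isOpenEmbedding hΩ.isOpenEmbedding_subtypeVal]
    infer_instance
  have hf_cont : Tendsto (f : C(Ω, ℂ)) (𝓝[≠] ζ) (𝓝 ((f : C(Ω, ℂ)) ζ)) :=
    (f : C(Ω, ℂ)).continuous.continuousWithinAt
  obtain ⟨w, hw, hfw⟩ := exists_seq_forall_of_frequently (hf_cont.eventually_ne hf).frequently
  refine ⟨proportionalOff (connectedComponentIn Ω ζ) f ζ,
    fun i => ((f : C(Ω, ℂ)) (w i))⁻¹ • eval (w i), isClosed_proportionalOff _ f ζ,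
    not_finite_proportionalOff hΩ hΩ.connectedComponentIn
      (isOpen_sdiff_connectedComponentIn hΩ _) hζ hf, self_mem_proportionalOff _ f ζ,
    fun i => inv_mul_cancel₀ (hfw i), fun g => ?_, fun g hgV hg => ?_⟩
  · have hlim : Tendsto (fun i => ((f : C(Ω, ℂ)) (w i))⁻¹ * (g : C(Ω, ℂ)) (w i)) atTop
        (𝓝 (((f : C(Ω, ℂ)) ζ)⁻¹ * (g : C(Ω, ℂ)) ζ)) :=
      ((hf_cont.comp hw).inv₀ hf).mul
        (((g : C(Ω, ℂ)).continuous.tendsto ζ).comp (hw.mono_right nhdsWithin_le_nhds))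
    simpa using (Metric.isBounded_range_of_tendsto _ hlim).exists_norm_le
  · have hgw : ∃ᶠ z in 𝓝[≠] ζ, (g : C(Ω, ℂ)) z = 0 :=
      hw.frequently (.of_forall fun i => by simpa [hfw i] using hg i)
    exact eq_zero_of_mem_proportionalOff hgV hζ hf fun z =>
      eqOn_zero_connectedComponentIn hΩ hgw

end Hol

/-- `S_p \ S_uc` is pointwise spaceable in `H(Ω)^ℕ`. -/
theorem Sp_diff_Suc_pointwise_spaceable
    (Ω : Set ℂ) (hΩ : IsOpen Ω) (hne : Ω.Nonempty) :
    ∀ f ∈ Sp Ω \ Suc Ω, ∃ M : Submodule ℂ (HSeq Ω),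
      IsClosed (M : Set (HSeq Ω)) ∧ ¬ Module.Finite ℂ M ∧
      f ∈ M ∧ (M : Set (HSeq Ω)) \ {0} ⊆ Sp Ω \ Suc Ω := by
  intro f ⟨hf_Sp, hf_Suc⟩
  obtain ⟨K, hK, ε, hε, hfK⟩ := notMem_Suc_iff.1 hf_Suc
  obtain ⟨j, hj⟩ := exists_partition_frequently hfK
  obtain ⟨m, ζ, -, hζ⟩ := hfK.exists
  obtain ⟨V, ψ, hV_closed, hV_inf, hfV, hψf, hψ_bdd, hψ_sep⟩ :=
    Hol.exists_submodule_and_separating_functionals hΩ (norm_pos_iff.1 (hε.trans_le hζ))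
  refine ⟨V.map (multiplierMap f m (ψ ∘ j)).toLinearMap, isClosed_map_multiplierMap hV_closed,
    not_finite_map_multiplierMap hV_inf,
    ⟨f m, hfV, multiplierMap_eq_self fun n => hψf (j n)⟩, ?_⟩
  rintro _ ⟨⟨g, hgV, rfl⟩, hF0⟩
  have hg0 : g ≠ 0 := fun h => hF0 (by simp [h])
  have hmul : ∀ᶠ n in atTop, multiplierMap f m (ψ ∘ j) g n = ψ (j n) g • f n :=
    (eventually_ne_atTop m).mono fun n hn => multiplierMap_apply_of_ne hn g
  constructor
  · obtain ⟨B, hB⟩ := hψ_bdd g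
    exact mem_Sp_of_eventuallyEq_smul hf_Sp (isBoundedUnder_of ⟨B, fun n => hB (j n)⟩) hmul
  · obtain ⟨i, hi⟩ : ∃ i, ψ i g ≠ 0 := not_forall.1 fun h => hg0 (hψ_sep g hgV h)
    refine notMem_Suc_of_frequently_eq_smul (f := f) hK hε hi (((hj i).and_eventually hmul).mono ?_)
    rintro n ⟨⟨rfl, hn⟩, hFn⟩
    exact ⟨hFn, hn⟩
end
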